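/- Let p be a prime with p ≡ 2 (mod 3), and let k, n be nonnegative integers such that p does not divide n+1. Then, as an identity of integers, (p² + 1)·B_3(p^k·n + p^k − 1) = (p^{2(k+1)} + (−1)^k)·B_3(n). -/

import Mathlib

/-- The hook length of the cell `(i, j)` in a Young diagram `μ`:
arm length + leg length + 1. -/
def YoungDiagram.hookLength (μ : YoungDiagram) (i j : ℕ) : ℕ :=
  μ.rowLen i + μ.colLen j - i - j - 1

/-- A Young diagram (equivalently, a partition) is a 3-core if none of its
hook numbers is divisible by 3. -/
def YoungDiagram.IsThreeCore (μ : YoungDiagram) : Prop :=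
  ∀ c ∈ μ.cells, ¬ (3 ∣ μ.hookLength c.1 c.2)

/-- `a3 n` is the number of 3-core partitions of `n`. -/
noncomputable def a3 (n : ℕ) : ℕ :=
  Nat.card {μ : YoungDiagram // μ.card = n ∧ μ.IsThreeCore}

/-- `A3 n` is the number of partition pairs of `n` in which each partition is a 3-core. -/
noncomputable def A3 (n : ℕ) : ℕ :=
  Nat.card {p : YoungDiagram × YoungDiagram //
    p.1.card + p.2.card = n ∧ p.1.IsThreeCore ∧ p.2.IsThreeCore}

/-- `B3 n` is the number of partition triples of `n` in which each partition is a 3-core. -/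
noncomputable def B3 (n : ℕ) : ℕ :=
  Nat.card {p : YoungDiagram × YoungDiagram × YoungDiagram //
    p.1.card + p.2.1.card + p.2.2.card = n ∧
    p.1.IsThreeCore ∧ p.2.1.IsThreeCore ∧ p.2.2.IsThreeCore}

noncomputable section TC

namespace TC

/-- triangular -/
def tri (n : ℤ) : ℤ := n * (n - 1) / 2

lemma tri_two (n : ℤ) : 2 * tri n = n * (n - 1) := by
  unfold tri
  exact Int.two_mul_ediv_two_of_even (by
    rcases Int.even_or_odd n with h | h
    · exact h.mul_right _
    · exact (h.sub_odd odd_one).mul_left _)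

lemma tri_succ (n : ℤ) : tri (n + 1) = tri n + n := by
  have h1 := tri_two n
  have h2 := tri_two (n + 1)
  nlinarith

lemma tri_pred (n : ℤ) : tri (n - 1) = tri n - (n - 1) := by
  have h := tri_succ (n - 1)
  rw [sub_add_cancel] at h
  omega

def jt (q : ℝ) (n : ℤ) : ℝ := (-1) ^ n * q ^ tri n

variable {q : ℝ}

lemma jt_succ (h0 : 0 < q) (n : ℤ) : jt q (n + 1) = -(q ^ n) * jt q n := by
  unfold jt
  rw [tri_succ, zpow_add₀ h0.ne', zpow_add_one₀ (by norm_num)]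
  ring

lemma jt_pred (h0 : 0 < q) (n : ℤ) : jt q (n - 1) = -(q * (q ^ n)⁻¹) * jt q n := by
  have h := jt_succ h0 (n - 1)
  rw [sub_add_cancel] at h
  rw [h, zpow_sub_one₀ h0.ne']
  have : q ^ n ≠ 0 := (zpow_pos h0 n).ne'
  field_simp

lemma abs_jt (h0 : 0 < q) (n : ℤ) : |jt q n| = q ^ tri n := by
  unfold jt
  rw [abs_mul, abs_zpow]
  simp [abs_of_pos (zpow_pos h0 _)]

def qp (q : ℝ) (n : ℕ) : ℝ := ∏ i ∈ Finset.range n, (1 - q ^ (i + 1))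

def qr (q : ℝ) (k : ℤ) : ℝ := if 0 ≤ k then 1 / qp q k.toNat else 0

lemma fac_pos (h0 : 0 < q) (h1 : q < 1) (i : ℕ) : 0 < 1 - q ^ (i + 1) :=
  sub_pos.2 (pow_lt_one₀ h0.le h1 (by omega))

lemma qp_pos (h0 : 0 < q) (h1 : q < 1) (n : ℕ) : 0 < qp q n :=
  Finset.prod_pos fun i _ => fac_pos h0 h1 i

lemma qp_succ (n : ℕ) : qp q (n + 1) = qp q n * (1 - q ^ (n + 1)) := by
  unfold qp; rw [Finset.prod_range_succ]

lemma qp_le_one (h0 : 0 < q) (h1 : q < 1) (n : ℕ) : qp q n ≤ 1 :=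
  Finset.prod_le_one (fun i _ => (fac_pos h0 h1 i).le) fun i _ => by
    have := pow_pos h0 (i + 1); linarith

lemma qr_pred (h0 : 0 < q) (h1 : q < 1) (k : ℤ) : qr q (k - 1) = (1 - q ^ k) * qr q k := by
  unfold qr
  rcases lt_trichotomy k 0 with h | h | h
  · rw [if_neg (by omega), if_neg (by omega)]; simp
  · subst h; simp
  · obtain ⟨m, rfl⟩ : ∃ m : ℕ, k = m + 1 := ⟨(k - 1).toNat, by omega⟩
    rw [if_pos (by omega), if_pos (by omega)]
    have e1 : ((m : ℤ) + 1 - 1).toNat = m := by omega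
    have e2 : ((m : ℤ) + 1).toNat = m + 1 := by omega
    rw [e1, e2, qp_succ]
    have := (qp_pos h0 h1 m).ne'
    have h2 := (fac_pos h0 h1 m).ne'
    have e3 : q ^ ((m : ℤ) + 1) = q ^ (m + 1) := by exact_mod_cast rfl
    rw [e3]
    field_simp

/-- finite triple product coefficients -/
def an (q : ℝ) (N : ℕ) (n : ℤ) : ℝ := jt q n * (qp q (2 * N) * qr q (N - n) * qr q (N + n))

lemma an_rec (h0 : 0 < q) (h1 : q < 1) (N : ℕ) (n : ℤ) :
    an q (N + 1) n = (1 + q ^ (2 * N + 1)) * an q N n - q ^ N * an q N (n - 1)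
      - q ^ (N + 1) * an q N (n + 1) := by
  unfold an
  rw [jt_succ h0, jt_pred h0]
  have a1 := qr_pred h0 h1 ((N + 1 : ℤ) - n)
  have a2 := qr_pred h0 h1 ((N : ℤ) - n)
  have b1 := qr_pred h0 h1 ((N + 1 : ℤ) + n)
  have b2 := qr_pred h0 h1 ((N : ℤ) + n)
  have e1 : (N + 1 : ℤ) - n - 1 = N - n := by ring
  have e2 : (N + 1 : ℤ) + n - 1 = N + n := by ring
  rw [e1] at a1
  rw [e2] at b1
  have e3 : (N : ℤ) - (n - 1) = N + 1 - n := by ring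
  have e4 : (N : ℤ) + (n - 1) = N + n - 1 := by ring
  have e5 : (N : ℤ) - (n + 1) = N - n - 1 := by ring
  have e6 : (N : ℤ) + (n + 1) = N + 1 + n := by ring
  rw [e3, e4, e5, e6, a2, b2, a1, b1, show 2 * (N + 1) = 2 * N + 1 + 1 by ring, qp_succ, qp_succ]
  have z1 : q ^ ((N : ℤ) + 1 - n) = q ^ N * q * (q ^ n)⁻¹ := by
    rw [zpow_sub₀ h0.ne', zpow_add_one₀ h0.ne', zpow_natCast]; rfl
  have z2 : q ^ ((N : ℤ) - n) = q ^ N * (q ^ n)⁻¹ := by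
    rw [zpow_sub₀ h0.ne', zpow_natCast]; rfl
  have z3 : q ^ ((N : ℤ) + 1 + n) = q ^ N * q * (q ^ n) := by
    rw [zpow_add₀ h0.ne', zpow_add_one₀ h0.ne', zpow_natCast]
  have z4 : q ^ ((N : ℤ) + n) = q ^ N * (q ^ n) := by
    rw [zpow_add₀ h0.ne', zpow_natCast]
  rw [z1, z2, z3, z4]
  push_cast
  have hz : q ^ n ≠ 0 := (zpow_pos h0 n).ne'
  generalize q ^ n = z at *
  generalize qr q _ = A
  generalize qr q _ = B
  generalize qp q _ = C
  generalize jt q _ = D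
  field_simp
  ring

lemma an_zero (n : ℤ) (hn : n ≠ 0) : an q 0 n = 0 := by
  unfold an qr
  rcases lt_or_gt_of_ne hn with h | h
  · have : ¬ (0 ≤ ((0 : ℕ) : ℤ) + n) := by push_cast; omega
    rw [if_neg this]; simp
  · have : ¬ (0 ≤ ((0 : ℕ) : ℤ) - n) := by push_cast; omega
    rw [if_neg this]; simp

lemma an_zero_zero : an q 0 0 = 1 := by
  simp [an, qr, qp, jt, tri]

lemma an_hasSum (h0 : 0 < q) (h1 : q < 1) {y : ℝ} (hy : 0 < y) (N : ℕ) :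
    HasSum (fun n : ℤ => an q N n * y ^ n)
      (∏ i ∈ Finset.range N, ((1 - y * q ^ i) * (1 - q ^ (i + 1) / y))) := by
  induction N with
  | zero =>
    have := hasSum_single (f := fun n : ℤ => an q 0 n * y ^ n) 0 (fun n hn => by
      simp [an_zero n hn])
    simpa [an_zero_zero] using this
  | succ N ih =>
    have s1 := (Equiv.subRight (1 : ℤ)).hasSum_iff.2 ih
    have s2 := (Equiv.addRight (1 : ℤ)).hasSum_iff.2 ih
    have := ((ih.mul_left (1 + q ^ (2 * N + 1))).sub (s1.mul_left (q ^ N * y))).sub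
      (s2.mul_left (q ^ (N + 1) / y))
    rw [Finset.prod_range_succ]
    convert! this using 1
    · funext n
      rw [an_rec h0 h1]
      simp only [Function.comp, Equiv.subRight_apply, Equiv.coe_addRight, zpow_sub_one₀ hy.ne',
        zpow_add_one₀ hy.ne']
      field_simp
    · field_simp
      ring

lemma an_hasSum_w (h0 : 0 < q) (h1 : q < 1) (N : ℕ) :
    HasSum (fun n : ℤ => (n : ℝ) * an q (N + 1) n) (-(qp q N * qp q (N + 1))) := by
  have step : ∀ (N : ℕ) (W V : ℝ), HasSum (fun n : ℤ => (n : ℝ) * an q N n) W →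
      HasSum (fun n : ℤ => an q N n) V →
      HasSum (fun n : ℤ => (n : ℝ) * an q (N + 1) n)
        ((1 + q ^ (2 * N + 1)) * W - q ^ N * (W + V) - q ^ (N + 1) * (W - V)) := by
    intro N W V hW hV
    have s1 := (Equiv.subRight (1 : ℤ)).hasSum_iff.2 (hW.add hV)
    have s2 := (Equiv.addRight (1 : ℤ)).hasSum_iff.2 (hW.sub hV)
    have := ((hW.mul_left (1 + q ^ (2 * N + 1))).sub (s1.mul_left (q ^ N))).sub
      (s2.mul_left (q ^ (N + 1)))
    convert! this using 1
    funext n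
    rw [an_rec h0 h1]
    simp only [Function.comp, Equiv.subRight_apply, Equiv.coe_addRight]
    push_cast
    ring
  have hV : ∀ N : ℕ, HasSum (fun n : ℤ => an q N n)
      (∏ i ∈ Finset.range N, ((1 - 1 * q ^ i) * (1 - q ^ (i + 1) / 1))) := by
    intro N
    simpa using an_hasSum h0 h1 one_pos N
  induction N with
  | zero =>
    have hW : HasSum (fun n : ℤ => (n : ℝ) * an q 0 n) 0 := by
      convert hasSum_zero using 2 with n
      by_cases hn : n = 0
      · simp [hn]
      · simp [an_zero n hn]
    have := step 0 0 _ hW (hV 0)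
    convert! this using 1
    simp [qp]; ring
  | succ N ih =>
    have hz : (∏ i ∈ Finset.range (N + 1), ((1 - 1 * q ^ i) * (1 - q ^ (i + 1) / 1))) = 0 := by
      apply Finset.prod_eq_zero (i := 0) (by simp)
      simp
    have := step (N + 1) _ _ ih (hV (N + 1))
    rw [hz] at this
    convert! this using 1
    rw [qp_succ (N + 1), qp_succ N]
    ring

open Filter Topology

lemma tri_neg (n : ℤ) : tri (-n) = tri n + n := by
  have h1 := tri_two n
  have h2 := tri_two (-n)
  nlinarith

lemma summable_nat_w (h0 : 0 < q) (h1 : q < 1) {x : ℝ} (hx : 0 < x) :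
    Summable (fun n : ℕ => ((n : ℝ) + 1) * q ^ tri n * x ^ n) := by
  have pos : ∀ n : ℕ, 0 < ((n : ℝ) + 1) * q ^ tri n * x ^ n := fun n => by
    have := zpow_pos h0 (tri n)
    positivity
  refine summable_of_ratio_test_tendsto_lt_one (l := 0) one_pos
    (Eventually.of_forall fun n => (pos n).ne') ?_
  have e : (fun n : ℕ => ‖(((n + 1 : ℕ) : ℝ) + 1) * q ^ tri ((n + 1 : ℕ) : ℤ) * x ^ (n + 1)‖ /
      ‖((n : ℝ) + 1) * q ^ tri n * x ^ n‖) = fun n : ℕ => (1 + 1 / ((n : ℝ) + 1)) * q ^ n * x := by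
    funext n
    rw [Real.norm_of_nonneg (pos _).le, Real.norm_of_nonneg (pos _).le]
    push_cast
    rw [tri_succ, zpow_add₀ h0.ne', zpow_natCast, pow_succ]
    have := (zpow_pos h0 (tri n)).ne'
    field_simp
  rw [e]
  have t1 : Tendsto (fun n : ℕ => 1 + 1 / ((n : ℝ) + 1)) atTop (𝓝 (1 + 0)) :=
    tendsto_const_nhds.add tendsto_one_div_add_atTop_nhds_zero_nat
  have t2 := tendsto_pow_atTop_nhds_zero_of_lt_one h0.le h1
  simpa using (t1.mul t2).mul_const x

lemma summable_w (h0 : 0 < q) (h1 : q < 1) {x : ℝ} (hx : 0 < x) :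
    Summable (fun n : ℤ => ((|n| : ℤ) + 1 : ℝ) * (q ^ tri n * x ^ n)) := by
  apply Summable.of_nat_of_neg
  · refine (summable_nat_w h0 h1 hx).congr fun n => ?_
    simp [mul_assoc]
  · refine (summable_nat_w h0 h1 (x := q / x) (by positivity)).congr fun n => ?_
    rw [tri_neg, zpow_add₀ h0.ne']
    simp [mul_assoc, div_pow, div_eq_mul_inv, mul_pow]

lemma summable_absj (h0 : 0 < q) (h1 : q < 1) {x : ℝ} (hx : 0 < x) :
    Summable (fun n : ℤ => q ^ tri n * x ^ n) := by
  refine (summable_w h0 h1 hx).of_nonneg_of_le (fun n => ?_) fun n => ?_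
  · have := zpow_pos h0 (tri n)
    have := zpow_pos hx n
    positivity
  · have := zpow_pos h0 (tri n)
    have := zpow_pos hx n
    have h : (0 : ℝ) ≤ ((|n| : ℤ) : ℝ) := by exact_mod_cast abs_nonneg n
    nlinarith [mul_pos (zpow_pos h0 (tri n)) (zpow_pos hx n)]

lemma norm_j (h0 : 0 < q) {x : ℝ} (hx : 0 < x) (n : ℤ) : ‖jt q n * x ^ n‖ = q ^ tri n * x ^ n := by
  rw [norm_mul, Real.norm_eq_abs, abs_jt h0, Real.norm_of_nonneg (zpow_pos hx n).le]

lemma summable_j_norm (h0 : 0 < q) (h1 : q < 1) {x : ℝ} (hx : 0 < x) :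
    Summable (fun n : ℤ => ‖jt q n * x ^ n‖) := by
  refine (summable_absj h0 h1 hx).congr fun n => ?_
  rw [norm_j h0 hx]

lemma summable_jw_norm (h0 : 0 < q) (h1 : q < 1) {x : ℝ} (hx : 0 < x) :
    Summable (fun n : ℤ => ‖(n : ℝ) * (jt q n * x ^ n)‖) := by
  refine (summable_w h0 h1 hx).of_nonneg_of_le (fun n => norm_nonneg _) fun n => ?_
  rw [norm_mul, norm_j h0 hx]
  have := mul_pos (zpow_pos h0 (tri n)) (zpow_pos hx n)
  gcongr
  rw [Real.norm_eq_abs]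
  push_cast
  linarith

def js (q x : ℝ) : ℝ := ∑' n : ℤ, jt q n * x ^ n

def cc (q : ℝ) : ℝ := ∑' n : ℤ, (n : ℝ) * jt q n

def EE (q : ℝ) : ℝ := Real.exp (∑' n : ℕ, Real.log (1 - q ^ (n + 1)))

lemma EE_pos : 0 < EE q := Real.exp_pos _

lemma EE_hasProd (h0 : 0 < q) (h1 : q < 1) : HasProd (fun n : ℕ => 1 - q ^ (n + 1)) (EE q) := by
  refine Real.hasProd_of_hasSum_log (fac_pos h0 h1) (Summable.hasSum ?_)
  have : Summable (fun n : ℕ => -(q ^ (n + 1))) := by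
    have := (summable_geometric_of_lt_one h0.le h1).mul_left (-q)
    refine this.congr fun n => ?_
    ring
  refine (Real.summable_log_one_add_of_summable this).congr fun n => ?_
  rw [sub_eq_add_neg]

lemma qp_tendsto (h0 : 0 < q) (h1 : q < 1) : Tendsto (qp q) atTop (𝓝 (EE q)) :=
  (EE_hasProd h0 h1).tendsto_prod_nat

lemma qp_anti (h0 : 0 < q) (h1 : q < 1) : Antitone (qp q) := by
  refine antitone_nat_of_succ_le fun n => ?_
  rw [qp_succ]
  have := qp_pos h0 h1 n
  have := pow_pos h0 (n + 1)
  nlinarith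

lemma EE_le (h0 : 0 < q) (h1 : q < 1) (n : ℕ) : EE q ≤ qp q n :=
  (qp_anti h0 h1).le_of_tendsto (qp_tendsto h0 h1) n

lemma qr_nonneg (h0 : 0 < q) (h1 : q < 1) (k : ℤ) : 0 ≤ qr q k := by
  unfold qr
  split_ifs
  · have := qp_pos h0 h1 k.toNat
    positivity
  · rfl

lemma qr_le (h0 : 0 < q) (h1 : q < 1) (k : ℤ) : qr q k ≤ 1 / EE q := by
  unfold qr
  split_ifs
  · exact one_div_le_one_div_of_le EE_pos (EE_le h0 h1 _)
  · exact (one_div_pos.2 EE_pos).le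

lemma qr_tendsto (h0 : 0 < q) (h1 : q < 1) (n : ℤ) :
    Tendsto (fun N : ℕ => qr q (N + n)) atTop (𝓝 (1 / EE q)) := by
  have h : Tendsto (fun N : ℕ => 1 / qp q ((N : ℤ) + n).toNat) atTop (𝓝 (1 / EE q)) := by
    refine tendsto_const_nhds.div ((qp_tendsto h0 h1).comp ?_) EE_pos.ne'
    refine tendsto_atTop.2 fun b => ?_
    filter_upwards [eventually_ge_atTop (b + (-n).toNat)] with N hN
    omega
  refine h.congr' ?_
  filter_upwards [eventually_ge_atTop ((-n).toNat)] with N hN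
  rw [qr, if_pos (by omega)]

lemma an_tendsto (h0 : 0 < q) (h1 : q < 1) (n : ℤ) :
    Tendsto (fun N : ℕ => an q N n) atTop (𝓝 (jt q n * (1 / EE q))) := by
  unfold an
  refine tendsto_const_nhds.mul ?_
  have t1 : Tendsto (fun N : ℕ => qp q (2 * N)) atTop (𝓝 (EE q)) :=
    (qp_tendsto h0 h1).comp (tendsto_id.const_mul_atTop' (by norm_num))
  have := (t1.mul (qr_tendsto h0 h1 (-n))).mul (qr_tendsto h0 h1 n)
  have e : EE q * (1 / EE q) * (1 / EE q) = 1 / EE q := by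
    have := (EE_pos (q := q)).ne'
    field_simp
  rw [e] at this
  simpa [sub_eq_add_neg] using this

lemma an_bound (h0 : 0 < q) (h1 : q < 1) (N : ℕ) (n : ℤ) :
    ‖an q N n‖ ≤ ‖jt q n‖ * (1 / EE q * (1 / EE q)) := by
  unfold an
  rw [norm_mul]
  gcongr
  have a := qr_nonneg h0 h1 (N - n)
  have b := qr_nonneg h0 h1 (N + n)
  have c := qp_pos h0 h1 (2 * N)
  rw [Real.norm_of_nonneg (by positivity)]
  have := qr_le h0 h1 (N - n)
  have := qr_le h0 h1 (N + n)
  have := qp_le_one h0 h1 (2 * N)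
  calc qp q (2 * N) * qr q (N - n) * qr q (N + n) ≤ 1 * (1 / EE q) * (1 / EE q) := by
        gcongr
        have := EE_pos (q := q)
        positivity
    _ = _ := by ring

lemma js_lim (h0 : 0 < q) (h1 : q < 1) {y : ℝ} (hy : 0 < y) :
    Tendsto (fun N : ℕ => ∏ i ∈ Finset.range N, ((1 - y * q ^ i) * (1 - q ^ (i + 1) / y))) atTop
      (𝓝 (js q y * (1 / EE q))) := by
  have h := tendsto_tsum_of_dominated_convergence (𝓕 := atTop)
    (f := fun (N : ℕ) (n : ℤ) => an q N n * y ^ n)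
    (g := fun n => jt q n * (1 / EE q) * y ^ n)
    (bound := fun n => ‖jt q n * y ^ n‖ * (1 / EE q * (1 / EE q)))
    ((summable_j_norm h0 h1 hy).mul_right _)
    (fun n => (an_tendsto h0 h1 n).mul_const _)
    (Eventually.of_forall fun N n => by
      rw [norm_mul, norm_mul]
      calc _ ≤ ‖jt q n‖ * (1 / EE q * (1 / EE q)) * ‖y ^ n‖ := by
            gcongr
            exact an_bound h0 h1 N n
        _ = _ := by ring)
  have e : ∑' n : ℤ, jt q n * (1 / EE q) * y ^ n = js q y * (1 / EE q) := by
    rw [js, ← tsum_mul_right]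
    congr 1; funext n; ring
  rw [e] at h
  exact h.congr fun N => (an_hasSum h0 h1 hy N).tsum_eq

lemma cc_eq (h0 : 0 < q) (h1 : q < 1) : cc q = -(EE q) ^ 3 := by
  have h := tendsto_tsum_of_dominated_convergence (𝓕 := atTop)
    (f := fun (N : ℕ) (n : ℤ) => (n : ℝ) * an q (N + 1) n)
    (g := fun n => (n : ℝ) * (jt q n * (1 / EE q)))
    (bound := fun n => ‖(n : ℝ) * (jt q n * 1 ^ n)‖ * (1 / EE q * (1 / EE q)))
    ((summable_jw_norm h0 h1 one_pos).mul_right _)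
    (fun n => ((tendsto_add_atTop_iff_nat 1).2 (an_tendsto h0 h1 n)).const_mul _)
    (Eventually.of_forall fun N n => by
      rw [norm_mul, norm_mul, one_zpow, mul_one, mul_assoc]
      gcongr
      exact an_bound h0 h1 (N + 1) n)
  have e : ∑' n : ℤ, (n : ℝ) * (jt q n * (1 / EE q)) = cc q * (1 / EE q) := by
    rw [cc, ← tsum_mul_right]
    congr 1; funext n; ring
  rw [e] at h
  have h' := h.congr fun N => (an_hasSum_w h0 h1 N).tsum_eq
  have t := ((qp_tendsto h0 h1).mul ((tendsto_add_atTop_iff_nat 1).2 (qp_tendsto h0 h1))).neg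
  have := tendsto_nhds_unique h' t
  have := (EE_pos (q := q)).ne'
  field_simp at *
  linarith

lemma qp_three (N : ℕ) : qp q (3 * N) = qp (q ^ 3) N *
    ∏ i ∈ Finset.range N, ((1 - q * (q ^ 3) ^ i) * (1 - (q ^ 3) ^ (i + 1) / q)) := by
  by_cases hq : q = 0
  · subst hq
    simp [qp]
  induction N with
  | zero => simp [qp]
  | succ N ih =>
    rw [show 3 * (N + 1) = 3 * N + 1 + 1 + 1 by ring, qp_succ, qp_succ, qp_succ, qp_succ, ih,
      Finset.prod_range_succ]
    have : (q ^ 3) ^ (N + 1) / q = q ^ (3 * N + 1 + 1) := by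
      field_simp
      ring
    rw [this]
    ring

lemma js_q (h0 : 0 < q) (h1 : q < 1) : js (q ^ 3) q = EE q := by
  have h0' : 0 < q ^ 3 := by positivity
  have h1' : q ^ 3 < 1 := pow_lt_one₀ h0.le h1 (by norm_num)
  have t := (qp_tendsto h0' h1').mul (js_lim h0' h1' h0)
  have t1 : Tendsto (fun N : ℕ => qp q (3 * N)) atTop (𝓝 (EE q)) :=
    (qp_tendsto h0 h1).comp (tendsto_id.const_mul_atTop' (by norm_num))
  have := tendsto_nhds_unique (t.congr fun N => (qp_three N).symm) t1
  rw [← this]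
  have := (EE_pos (q := q ^ 3)).ne'
  field_simp

lemma js_q2 (h0 : 0 < q) : js (q ^ 3) (q ^ 2) = js (q ^ 3) q := by
  unfold js
  rw [← (Equiv.neg ℤ).tsum_eq]
  congr 1; funext n
  simp only [Equiv.neg_apply, jt, tri_neg]
  have h3 : (q ^ 3) ≠ 0 := by positivity
  rw [zpow_add₀ h3, zpow_neg, zpow_neg]
  have e1 : ((-1 : ℝ) ^ n)⁻¹ = (-1) ^ n := by
    rw [← inv_zpow]; norm_num
  rw [e1]
  have : (q ^ 3) ^ n * ((q ^ 2) ^ n)⁻¹ = q ^ n := by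
    rw [← inv_zpow, ← mul_zpow]
    congr 1
    field_simp
  rw [← this]; ring

lemma js_one (h0 : 0 < q) : js q 1 = 0 := by
  have e : js q 1 = - js q 1 := by
    conv_lhs => rw [js, ← (Equiv.subLeft (1 : ℤ)).tsum_eq]
    rw [js, ← tsum_neg]
    congr 1; funext n
    simp only [Equiv.subLeft_apply, one_zpow, mul_one]
    rw [show (1 : ℤ) - n = -n + 1 by ring, jt_succ h0]
    simp only [jt, tri_neg, zpow_add₀ h0.ne', zpow_neg]
    have e1 : ((-1 : ℝ) ^ n)⁻¹ = (-1) ^ n := by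
      rw [← inv_zpow]; norm_num
    rw [e1]
    have := (zpow_pos h0 n).ne'
    field_simp
  linarith

def ee (s a b : ℤ) : ℤ := 3 * (tri (s - a - b) + tri a + tri b) + a + 2 * b

def TT (q : ℝ) (s : ℤ) : ℝ := ∑' p : ℤ × ℤ, q ^ ee s p.1 p.2

lemma hasSum_triple {f g h : ℤ → ℝ} (hf : Summable (fun n => ‖f n‖))
    (hg : Summable (fun n => ‖g n‖)) (hh : Summable (fun n => ‖h n‖)) :
    HasSum (fun p : ℤ × ℤ × ℤ => f p.1 * (g p.2.1 * h p.2.2))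
      ((∑' n, f n) * ((∑' n, g n) * ∑' n, h n)) := by
  have s1 := summable_mul_of_summable_norm hf (hg.mul_norm hh)
  rw [tsum_mul_tsum_of_summable_norm hg hh,
    tsum_mul_tsum_of_summable_norm hf (hg.mul_norm hh)]
  exact s1.hasSum

/-- reindexing -/
def sEquiv : ℤ × ℤ × ℤ ≃ ℤ × ℤ × ℤ where
  toFun p := (p.1 - p.2.1 - p.2.2, p.2.1, p.2.2)
  invFun p := (p.1 + p.2.1 + p.2.2, p.2.1, p.2.2)
  left_inv p := by ext <;> simp <;> ring
  right_inv p := by ext <;> simp <;> ring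

lemma abs_term (h0 : 0 < q) (s a b : ℤ) :
    (q ^ 3) ^ tri (s - a - b) * 1 ^ (s - a - b) * ((q ^ 3) ^ tri a * q ^ a * ((q ^ 3) ^ tri b * (q ^ 2) ^ b))
      = q ^ ee s a b := by
  have h := h0.ne'
  unfold ee
  rw [show 3 * (tri (s - a - b) + tri a + tri b) + a + 2 * b
    = 3 * tri (s - a - b) + (3 * tri a + (a + (3 * tri b + 2 * b))) by ring]
  rw [zpow_add₀ h, zpow_add₀ h, zpow_add₀ h, zpow_add₀ h, zpow_mul, zpow_mul, zpow_mul, zpow_mul]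
  simp only [one_zpow, mul_one]
  norm_cast
  ring

lemma j_term (h0 : 0 < q) (s a b : ℤ) :
    jt (q ^ 3) (s - a - b) * 1 ^ (s - a - b) * (jt (q ^ 3) a * q ^ a * (jt (q ^ 3) b * (q ^ 2) ^ b))
      = (-1) ^ s * q ^ ee s a b := by
  rw [← abs_term h0]
  unfold jt
  have e : (-1 : ℝ) ^ s = (-1) ^ (s - a - b) * (-1) ^ a * (-1) ^ b := by
    rw [← zpow_add₀ (by norm_num), ← zpow_add₀ (by norm_num)]
    congr 1; ring
  rw [e]
  ring

lemma summable_ee (h0 : 0 < q) (h1 : q < 1) (s : ℤ) :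
    Summable (fun p : ℤ × ℤ => q ^ ee s p.1 p.2) := by
  have h0' : 0 < q ^ 3 := by positivity
  have h1' : q ^ 3 < 1 := pow_lt_one₀ h0.le h1 (by norm_num)
  have := (hasSum_triple (summable_absj h0' h1' one_pos).norm
    (summable_absj h0' h1' h0).norm
    (summable_absj h0' h1' (x := q ^ 2) (by positivity)).norm).summable
  have := ((sEquiv).summable_iff.2 this).prod_factor s
  refine this.congr fun p => ?_
  exact abs_term h0 s p.1 p.2

def cEquiv (s : ℤ) : ℤ × ℤ ≃ ℤ × ℤ where
  toFun p := (s - p.1 - p.2, p.1)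
  invFun p := (p.2, s - p.1 - p.2)
  left_inv p := by ext <;> simp <;> ring
  right_inv p := by ext <;> simp <;> ring

lemma TT_succ (h0 : 0 < q) (s : ℤ) : TT q (s + 1) = q ^ s * TT q s := by
  unfold TT
  rw [← (cEquiv s).tsum_eq, ← tsum_mul_left]
  congr 1; funext p
  rw [← zpow_add₀ h0.ne']
  congr 1
  simp only [cEquiv, Equiv.coe_fn_mk, ee]
  rw [show s + 1 - (s - p.1 - p.2) - p.1 = p.2 + 1 by ring, tri_succ]
  ring

lemma TT_eq (h0 : 0 < q) (s : ℤ) : TT q s = q ^ tri s * TT q 0 := by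
  induction s using Int.induction_on with
  | zero => simp [tri]
  | succ n ih => rw [TT_succ h0, ih, tri_succ, zpow_add₀ h0.ne']; ring
  | pred n ih =>
    have h := TT_succ h0 (-(n : ℤ) - 1)
    rw [sub_add_cancel, ih] at h
    have h2 := tri_succ (-(n : ℤ) - 1)
    rw [sub_add_cancel] at h2
    rw [h2, zpow_add₀ h0.ne'] at h
    have := (zpow_pos h0 (-(n : ℤ) - 1)).ne'
    field_simp at h
    linarith

lemma TT_main (h0 : 0 < q) (h1 : q < 1) : TT q 0 * EE q = EE (q ^ 3) ^ 3 := by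
  have h0' : 0 < q ^ 3 := by positivity
  have h1' : q ^ 3 < 1 := pow_lt_one₀ h0.le h1 (by norm_num)
  have h2 : 0 < q ^ 2 := by positivity
  have a0 := summable_j_norm h0' h1' one_pos
  have a1 := summable_j_norm h0' h1' h0
  have a2 := summable_j_norm h0' h1' h2
  have b0 := summable_jw_norm h0' h1' one_pos
  have b1 := summable_jw_norm h0' h1' h0
  have b2 := summable_jw_norm h0' h1' h2
  have H := ((hasSum_triple b0 a1 a2).add (hasSum_triple a0 b1 a2)).add (hasSum_triple a0 a1 b2)
  have z : ∑' n : ℤ, jt (q ^ 3) n * 1 ^ n = 0 := js_one h0'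
  have c0 : ∑' n : ℤ, (n : ℝ) * (jt (q ^ 3) n * 1 ^ n) = cc (q ^ 3) := by simp [cc]
  have c1 : ∑' n : ℤ, jt (q ^ 3) n * q ^ n = EE q := js_q h0 h1
  have c2 : ∑' n : ℤ, jt (q ^ 3) n * (q ^ 2) ^ n = EE q := (js_q2 h0).trans (js_q h0 h1)
  rw [z, c0, c1, c2] at H
  have H2 := sEquiv.hasSum_iff.2 H
  have H3 : HasSum (fun p : ℤ × ℤ × ℤ => (p.1 : ℝ) * ((-1) ^ p.1 * q ^ ee p.1 p.2.1 p.2.2))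
      (cc (q ^ 3) * (EE q * EE q)) := by
    convert! H2 using 1
    · funext ⟨s, a, b⟩
      simp only [Function.comp, sEquiv, Equiv.coe_fn_mk]
      rw [← j_term h0]
      push_cast
      ring
    · ring
  have H4 := H3.prod_fiberwise (fun s => by
    have := ((summable_ee h0 h1 s).hasSum.mul_left ((-1) ^ s)).mul_left (s : ℝ)
    exact this)
  have H5 : HasSum (fun s : ℤ => (s : ℝ) * jt q s * TT q 0) (cc (q ^ 3) * (EE q * EE q)) := by
    convert! H4 using 1
    funext s
    have := TT_eq h0 s
    unfold TT at this ⊢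
    rw [this]
    unfold jt
    ring
  have H6 := H5.tsum_eq
  rw [tsum_mul_right] at H6
  have H7 : cc q * TT q 0 = cc (q ^ 3) * (EE q * EE q) := H6
  rw [cc_eq h0 h1, cc_eq h0' h1'] at H7
  have := EE_pos (q := q)
  have e : (TT q 0 * EE q) * (EE q) ^ 2 = EE (q ^ 3) ^ 3 * (EE q) ^ 2 := by linarith
  exact mul_right_cancel₀ (by positivity) e

def gg (q : ℝ) (n : ℤ) : ℝ := 1 / (1 - q ^ (3 * n + 1))

def FF (q x : ℝ) : ℝ := ∑' n : ℤ, x ^ n * gg q n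

lemma zp_ne (h0 : 0 < q) (h1 : q < 1) {k : ℤ} (hk : k ≠ 0) : 1 - q ^ k ≠ 0 := by
  intro h
  have h' : q ^ k = 1 := by linarith
  exact hk ((zpow_eq_one_iff_right₀ h0.le h1.ne).1 h')

lemma gg_bound (h0 : 0 < q) (h1 : q < 1) (n : ℕ) : |gg q n| ≤ 1 / (1 - q) := by
  unfold gg
  have hq : 0 < 1 - q := by linarith
  have : q ^ (3 * (n : ℤ) + 1) ≤ q := by
    have e : q ^ (3 * (n : ℤ) + 1) = q ^ (3 * n + 1) := by exact_mod_cast rfl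
    rw [e, pow_succ]
    have := pow_le_one₀ h0.le h1.le (n := 3 * n)
    nlinarith
  rw [abs_of_nonneg (by apply one_div_nonneg.2; linarith)]
  exact one_div_le_one_div_of_le hq (by linarith)

lemma gg_bound_neg (h0 : 0 < q) (h1 : q < 1) (n : ℕ) :
    |gg q (-(n + 1 : ℤ))| ≤ 1 / (1 - q) * (q ^ 3) ^ n := by
  have hq : 0 < 1 - q := by linarith
  have e : gg q (-(n + 1 : ℤ)) = - (q ^ (3 * n + 2) / (1 - q ^ (3 * n + 2))) := by
    unfold gg
    have e1 : q ^ (3 * (-(n + 1 : ℤ)) + 1) = (q ^ (3 * n + 2))⁻¹ := by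
      rw [← zpow_natCast, ← zpow_neg]
      congr 1
    rw [e1]
    have h2 : 0 < q ^ (3 * n + 2) := by positivity
    have h3 : q ^ (3 * n + 2) < 1 := pow_lt_one₀ h0.le h1 (by omega)
    have h4 : q ^ (3 * n + 2) - 1 ≠ 0 := by linarith
    have h5 : 1 - q ^ (3 * n + 2) ≠ 0 := by linarith
    generalize q ^ (3 * n + 2) = y at *
    have h6 : 1 - y⁻¹ ≠ 0 := by
      intro h
      apply h4
      field_simp at h
      linarith
    field_simp
    ring
  have h2 : 0 < q ^ (3 * n + 2) := by positivity
  have h3 : q ^ (3 * n + 2) ≤ q := by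
    rw [show 3 * n + 2 = (3 * n + 1) + 1 by ring, pow_succ]
    have := pow_le_one₀ h0.le h1.le (n := 3 * n + 1)
    nlinarith
  rw [e, abs_neg, abs_of_nonneg (div_nonneg h2.le (by linarith)), div_eq_mul_one_div, mul_comm]
  gcongr
  · rw [← pow_mul]
    exact pow_le_pow_of_le_one h0.le h1.le (by omega)

lemma F_summable (h0 : 0 < q) (h1 : q < 1) {x : ℝ} (hx : q ^ 3 < x) (hx1 : x < 1) :
    Summable (fun n : ℤ => ‖x ^ n * gg q n‖) := by
  have h3 : 0 < q ^ 3 := by positivity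
  have hx0 : 0 < x := h3.trans hx
  have hq : 0 < 1 - q := by linarith
  apply Summable.of_nat_of_neg_add_one
  · refine ((summable_geometric_of_lt_one hx0.le hx1).mul_left (1 / (1 - q))).of_nonneg_of_le
      (fun n => norm_nonneg _) fun n => ?_
    rw [norm_mul, Real.norm_eq_abs, Real.norm_eq_abs, zpow_natCast, abs_of_pos (by positivity),
      mul_comm]
    gcongr
    exact gg_bound h0 h1 n
  · refine ((summable_geometric_of_lt_one (r := q ^ 3 / x) (by positivity)
      ((div_lt_one hx0).2 hx)).mul_left (1 / (1 - q) / x)).of_nonneg_of_le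
      (fun n => norm_nonneg _) fun n => ?_
    rw [norm_mul, Real.norm_eq_abs, Real.norm_eq_abs, abs_of_pos (zpow_pos hx0 _)]
    calc _ ≤ x ^ (-(n + 1 : ℤ)) * (1 / (1 - q) * (q ^ 3) ^ n) := by
          gcongr
          exact gg_bound_neg h0 h1 n
      _ = _ := by
          rw [zpow_neg, div_pow]
          have : x ^ ((n : ℤ) + 1) = x ^ n * x := by
            rw [zpow_add_one₀ hx0.ne', zpow_natCast]
          rw [this]
          field_simp

lemma conv_aux {f g : ℤ → ℝ} (hf : Summable (fun n => ‖f n‖)) (hg : Summable (fun n => ‖g n‖)) :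
    (∀ s, Summable fun n => f n * g (s - n)) ∧
    HasSum (fun s => ∑' n, f n * g (s - n)) ((∑' n, f n) * ∑' n, g n) := by
  have s1 := summable_mul_of_summable_norm hf hg
  have H : HasSum (fun p : ℤ × ℤ => f p.1 * g p.2) ((∑' n, f n) * ∑' n, g n) := by
    rw [tsum_mul_tsum_of_summable_norm hf hg]
    exact s1.hasSum
  let e : ℤ × ℤ ≃ ℤ × ℤ :=
    { toFun := fun p => (p.2, p.1 - p.2)
      invFun := fun p => (p.1 + p.2, p.1)
      left_inv := fun p => by ext <;> simp
      right_inv := fun p => by ext <;> simp }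
  have H2 := e.hasSum_iff.2 H
  have s2 : ∀ s, Summable fun n => f n * g (s - n) := fun s => H2.summable.prod_factor s
  exact ⟨s2, H2.prod_fiberwise fun s => (s2 s).hasSum⟩

lemma gg_tendsto_top (h0 : 0 < q) (h1 : q < 1) :
    Tendsto (fun n : ℕ => gg q n) atTop (𝓝 1) := by
  have t : Tendsto (fun n : ℕ => q * (q ^ 3) ^ n) atTop (𝓝 (q * 0)) :=
    (tendsto_pow_atTop_nhds_zero_of_lt_one (by positivity)
      (pow_lt_one₀ h0.le h1 (by norm_num))).const_mul q
  have t2 := (tendsto_const_nhds (x := (1 : ℝ))).div ((tendsto_const_nhds (x := (1 : ℝ))).sub t)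
    (by simp)
  simp only [mul_zero, sub_zero, div_one] at t2
  refine t2.congr fun n => ?_
  unfold gg
  simp only [Pi.div_apply]
  congr 2
  rw [← pow_mul, ← pow_succ']
  exact_mod_cast rfl

lemma gg_tendsto_bot (h0 : 0 < q) (h1 : q < 1) :
    Tendsto (fun n : ℕ => gg q (-(n : ℤ))) atTop (𝓝 0) := by
  rw [← tendsto_add_atTop_iff_nat 1]
  refine squeeze_zero_norm (fun n => ?_) (a := fun n : ℕ => 1 / (1 - q) * (q ^ 3) ^ n) ?_
  · rw [Real.norm_eq_abs]
    push_cast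
    exact gg_bound_neg h0 h1 n
  · simpa using (tendsto_pow_atTop_nhds_zero_of_lt_one (by positivity)
      (pow_lt_one₀ h0.le h1 (n := 3) (by norm_num))).const_mul (1 / (1 - q))

def dl (q : ℝ) (r : ℤ) : ℝ := gg q (r + 1) - gg q r

lemma dl_hasSum_of (h0 : 0 < q) (h1 : q < 1) (hs : Summable (dl q)) : HasSum (dl q) 1 := by
  have hs1 : Summable (fun n : ℕ => dl q n) := hs.comp_injective Nat.cast_injective
  have hs2 : Summable (fun n : ℕ => dl q (-(n + 1 : ℤ))) :=
    hs.comp_injective (i := fun n : ℕ => -(n + 1 : ℤ)) (fun a b h => by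
      simp only at h; omega)
  have a1 : HasSum (fun n : ℕ => dl q n) (1 - gg q 0) := by
    rw [hs1.hasSum_iff_tendsto_nat]
    have : ∀ n : ℕ, ∑ i ∈ Finset.range n, dl q i = gg q n - gg q 0 := by
      intro n
      have := Finset.sum_range_sub (fun i : ℕ => gg q (i : ℤ)) n
      simpa [dl] using this
    simp_rw [this]
    exact (gg_tendsto_top h0 h1).sub_const _
  have a2 : HasSum (fun n : ℕ => dl q (-(n + 1 : ℤ))) (gg q 0 - 0) := by
    rw [hs2.hasSum_iff_tendsto_nat]
    have : ∀ n : ℕ, ∑ i ∈ Finset.range n, dl q (-(i + 1 : ℤ)) = gg q 0 - gg q (-(n : ℤ)) := by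
      intro n
      have := Finset.sum_range_sub' (fun i : ℕ => gg q (-(i : ℤ))) n
      simp only [Nat.cast_zero, neg_zero] at this
      rw [← this]
      refine Finset.sum_congr rfl fun i _ => ?_
      unfold dl
      rw [show -((i : ℤ) + 1) + 1 = -i by ring]
      push_cast
      rfl
    simp_rw [this]
    exact (gg_tendsto_bot h0 h1).const_sub _
  have := HasSum.of_nat_of_neg_add_one a1 a2
  simpa using this

lemma q3_lt (h0 : 0 < q) (h1 : q < 1) : q ^ 3 < q := by nlinarith [mul_pos h0 h0, mul_pos (mul_pos h0 h0) (sub_pos.2 h1), mul_pos h0 (sub_pos.2 h1)]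
lemma q3_lt2 (h0 : 0 < q) (h1 : q < 1) : q ^ 3 < q ^ 2 := by nlinarith [mul_pos h0 h0, mul_pos (mul_pos h0 h0) (sub_pos.2 h1)]
lemma q2_lt (h0 : 0 < q) (h1 : q < 1) : q ^ 2 < 1 := pow_lt_one₀ h0.le h1 (by norm_num)

def BB (q : ℝ) (s : ℤ) : ℝ := ∑' n, gg q n * gg q (s - n)

lemma x_split {x : ℝ} (hx : x ≠ 0) (s n : ℤ) : x ^ s = x ^ n * x ^ (s - n) := by
  rw [← zpow_add₀ hx]; congr 1; ring

lemma BB_summable (h0 : 0 < q) (h1 : q < 1) (s : ℤ) :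
    Summable (fun n => gg q n * gg q (s - n)) := by
  have h := (conv_aux (F_summable h0 h1 (q3_lt h0 h1) h1) (F_summable h0 h1 (q3_lt h0 h1) h1)).1 s
  refine (h.mul_left ((q ^ s)⁻¹)).congr fun n => ?_
  rw [x_split h0.ne' s n]
  have := (zpow_pos h0 n).ne'
  have := (zpow_pos h0 (s - n)).ne'
  field_simp

lemma FF_sq (h0 : 0 < q) (h1 : q < 1) {x : ℝ} (hx : q ^ 3 < x) (hx1 : x < 1) :
    HasSum (fun s : ℤ => x ^ s * BB q s) (FF q x * FF q x) := by
  have hx0 : 0 < x := (pow_pos h0 3).trans hx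
  have h := (conv_aux (F_summable h0 h1 hx hx1) (F_summable h0 h1 hx hx1)).2
  convert! h using 1
  funext s
  rw [BB, ← tsum_mul_left]
  congr 1; funext n
  rw [x_split hx0.ne' s n]
  ring

lemma gg_id (h0 : 0 < q) (h1 : q < 1) (s n : ℤ) :
    (1 - q ^ (3 * s + 2)) * (gg q n * gg q (s - n)) = gg q n + gg q (s - n) - 1 := by
  unfold gg
  have e : q ^ (3 * s + 2) = q ^ (3 * n + 1) * q ^ (3 * (s - n) + 1) := by
    rw [← zpow_add₀ h0.ne']; congr 1; ring
  have a := zp_ne h0 h1 (k := 3 * n + 1) (by omega)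
  have b := zp_ne h0 h1 (k := 3 * (s - n) + 1) (by omega)
  rw [e]
  generalize q ^ (3 * n + 1) = u at *
  generalize q ^ (3 * (s - n) + 1) = v at *
  field_simp
  ring

lemma bb_hasSum (h0 : 0 < q) (h1 : q < 1) (s : ℤ) :
    HasSum (fun n => gg q n + gg q (s - n) - 1) ((1 - q ^ (3 * s + 2)) * BB q s) := by
  have := (BB_summable h0 h1 s).hasSum.mul_left (1 - q ^ (3 * s + 2))
  simp only [gg_id h0 h1] at this
  exact this

lemma dl_diff (h0 : 0 < q) (h1 : q < 1) (s : ℤ) :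
    HasSum (dl q) ((1 - q ^ (3 * (s + 1) + 2)) * BB q (s + 1) - (1 - q ^ (3 * s + 2)) * BB q s) := by
  have := (bb_hasSum h0 h1 (s + 1)).sub (bb_hasSum h0 h1 s)
  rw [← (Equiv.subLeft s).hasSum_iff]
  convert! this using 1
  funext n
  simp only [Function.comp, Equiv.subLeft_apply, dl]
  rw [show s - n + 1 = s + 1 - n by ring]
  ring

lemma dl_hasSum (h0 : 0 < q) (h1 : q < 1) : HasSum (dl q) 1 :=
  dl_hasSum_of h0 h1 (dl_diff h0 h1 0).summable

lemma BB_eq (h0 : 0 < q) (h1 : q < 1) :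
    ∃ β : ℝ, ∀ s : ℤ, BB q s = (s + β) * (1 / (1 - q ^ (3 * s + 2))) := by
  refine ⟨(1 - q ^ (3 * (0 : ℤ) + 2)) * BB q 0, fun s => ?_⟩
  have key : ∀ s : ℤ, (1 - q ^ (3 * s + 2)) * BB q s = s + (1 - q ^ (3 * (0 : ℤ) + 2)) * BB q 0 := by
    intro s
    have step : ∀ s : ℤ, (1 - q ^ (3 * (s + 1) + 2)) * BB q (s + 1) =
        (1 - q ^ (3 * s + 2)) * BB q s + 1 := fun s => by
      have := (dl_diff h0 h1 s).unique (dl_hasSum h0 h1)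
      linarith
    induction s using Int.induction_on with
    | zero => simp
    | succ n ih => rw [step, ih]; push_cast; ring
    | pred n ih =>
      have := step (-(n : ℤ) - 1)
      rw [sub_add_cancel, ih] at this
      push_cast at this ⊢
      linarith
  rw [← key s]
  have := zp_ne h0 h1 (k := 3 * s + 2) (by omega)
  field_simp

def AA (q : ℝ) (t : ℤ) : ℝ := ∑' s, BB q s * gg q (t - s)

lemma AA_summable (h0 : 0 < q) (h1 : q < 1) (t : ℤ) :
    Summable (fun s => BB q s * gg q (t - s)) := by
  have h := (conv_aux (FF_sq h0 h1 (q3_lt h0 h1) h1).summable.norm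
    (F_summable h0 h1 (q3_lt h0 h1) h1)).1 t
  refine (h.mul_left ((q ^ t)⁻¹)).congr fun n => ?_
  rw [x_split h0.ne' t n]
  have := (zpow_pos h0 n).ne'
  have := (zpow_pos h0 (t - n)).ne'
  field_simp

lemma FF_cube (h0 : 0 < q) (h1 : q < 1) {x : ℝ} (hx : q ^ 3 < x) (hx1 : x < 1) :
    HasSum (fun T : ℤ => x ^ T * AA q (T - 1)) (x * FF q x ^ 3) := by
  have hx0 : 0 < x := (pow_pos h0 3).trans hx
  have h := (conv_aux (FF_sq h0 h1 hx hx1).summable.norm (F_summable h0 h1 hx hx1)).2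
  rw [(FF_sq h0 h1 hx hx1).tsum_eq] at h
  have h2 := ((Equiv.subRight (1 : ℤ)).hasSum_iff.2 h).mul_left x
  convert! h2 using 1
  · funext T
    simp only [Function.comp, Equiv.subRight_apply]
    rw [AA, ← tsum_mul_left, ← tsum_mul_left]
    congr 1; funext n
    have e : x ^ T = x * x ^ (T - 1) := by
      rw [← zpow_one_add₀ hx0.ne']; congr 1; ring
    rw [e, x_split hx0.ne' (T - 1) n]
    ring
  · unfold FF; ring

lemma gg_id2 (h0 : 0 < q) (h1 : q < 1) (T s : ℤ) :
    (1 - q ^ (3 * T)) * (1 / (1 - q ^ (3 * s + 2)) * gg q (T - 1 - s))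
      = gg q (T - 1 - s) - gg q (-1 - s) := by
  unfold gg
  have e : q ^ (3 * T) = q ^ (3 * s + 2) * q ^ (3 * (T - 1 - s) + 1) := by
    rw [← zpow_add₀ h0.ne']; congr 1; ring
  have e2 : q ^ (3 * (-1 - s) + 1) = (q ^ (3 * s + 2))⁻¹ := by
    rw [← zpow_neg]; congr 1; ring
  have a := zp_ne h0 h1 (k := 3 * s + 2) (by omega)
  have b := zp_ne h0 h1 (k := 3 * (T - 1 - s) + 1) (by omega)
  have c := zp_ne h0 h1 (k := 3 * (-1 - s) + 1) (by omega)
  have d := (zpow_pos h0 (3 * s + 2)).ne'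
  rw [e2] at c ⊢
  rw [e]
  generalize q ^ (3 * s + 2) = u at *
  generalize q ^ (3 * (T - 1 - s) + 1) = v at *
  have f : u - 1 ≠ 0 := by intro h; apply a; linarith
  have : 1 / (1 - u⁻¹) = - (u / (1 - u)) := by
    field_simp
    ring
  rw [this]
  field_simp
  ring

lemma AA_eq (h0 : 0 < q) (h1 : q < 1) :
    ∃ κ : ℝ, ∀ T : ℤ, (1 - q ^ (3 * T)) * AA q (T - 1) = (T : ℝ) ^ 2 / 2 + κ * T := by
  obtain ⟨β, hβ⟩ := BB_eq h0 h1
  set D : ℤ → ℝ := fun T => (1 - q ^ (3 * T)) * AA q (T - 1) with hD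
  have hs : ∀ T : ℤ, HasSum (fun s : ℤ => (s + β) * (gg q (T - 1 - s) - gg q (-1 - s))) (D T) := by
    intro T
    have := (AA_summable h0 h1 (T - 1)).hasSum.mul_left (1 - q ^ (3 * T))
    convert! this using 1
    funext s
    rw [← gg_id2 h0 h1, hβ]
    ring
  have hd : ∀ T : ℤ, HasSum (fun r : ℤ => (T - 1 - r + β) * dl q r) (D (T + 1) - D T) := by
    intro T
    have := (hs (T + 1)).sub (hs T)
    rw [← (Equiv.subLeft (T - 1)).hasSum_iff]
    convert! this using 1
    funext s
    simp only [Function.comp, Equiv.subLeft_apply, dl]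
    rw [show T - 1 - s + 1 = T + 1 - 1 - s by ring]
    push_cast
    ring
  have D0 : D 0 = 0 := by simp [hD]
  have step : ∀ T : ℤ, D (T + 1) = D T + T + D 1 := by
    intro T
    have a := (hd T).sub (hd 0)
    have b := (dl_hasSum h0 h1).mul_left (T : ℝ)
    have c := a.unique (by
      convert! b using 1
      funext r
      push_cast
      ring)
    rw [zero_add, D0] at c
    linarith
  refine ⟨D 1 - 1 / 2, fun T => ?_⟩
  change D T = _
  induction T using Int.induction_on with
  | zero => simp [D0]
  | succ n ih => rw [step, ih]; push_cast; ring
  | pred n ih =>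
    have := step (-(n : ℤ) - 1)
    rw [sub_add_cancel, ih] at this
    push_cast at this ⊢
    linarith

def vv (q : ℝ) (T : ℤ) : ℝ := (q ^ T - q ^ (2 * T)) / (1 - q ^ (3 * T))

lemma vv_neg (h0 : 0 < q) (h1 : q < 1) (T : ℤ) : vv q (-T) = vv q T := by
  by_cases hT : T = 0
  · simp [hT]
  unfold vv
  have a := zp_ne h0 h1 (k := 3 * T) (by omega)
  have b := zp_ne h0 h1 (k := 3 * -T) (by omega)
  have e : ∀ k : ℤ, q ^ (k * T) = (q ^ T) ^ k := fun k => by rw [mul_comm, zpow_mul]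
  have e' : ∀ k : ℤ, q ^ (k * -T) = ((q ^ T) ^ k)⁻¹ := fun k => by
    rw [mul_neg, zpow_neg, mul_comm, zpow_mul]
  rw [e] at a
  rw [e'] at b
  rw [e, e, e', e', zpow_neg]
  have d := (zpow_pos h0 T).ne'
  generalize q ^ T = z at *
  norm_cast at *
  have b' : z ^ 3 - 1 ≠ 0 := by intro h; apply a; linarith
  rw [div_eq_div_iff b a]
  field_simp
  ring

lemma cube_main (h0 : 0 < q) (h1 : q < 1) (hF : FF q (q ^ 2) = 0) :
    HasSum (fun T : ℤ => (T : ℝ) ^ 2 / 2 * vv q T) (q * FF q q ^ 3) := by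
  obtain ⟨κ, hκ⟩ := AA_eq h0 h1
  have a := (FF_cube h0 h1 (q3_lt h0 h1) h1).sub (FF_cube h0 h1 (q3_lt2 h0 h1) (q2_lt h0 h1))
  rw [hF] at a
  have b : HasSum (fun T : ℤ => ((T : ℝ) ^ 2 / 2 + κ * T) * vv q T) (q * FF q q ^ 3) := by
    convert! a using 1
    · funext T
      rw [← hκ T]
      by_cases hT : T = 0
      · simp [hT, vv]
      have c := zp_ne h0 h1 (k := 3 * T) (by omega)
      have e : (q ^ 2) ^ T = q ^ (2 * T) := by
        rw [zpow_mul]; norm_cast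
      rw [e]
      unfold vv
      field_simp
    · simp
  have b2 := (Equiv.neg ℤ).hasSum_iff.2 b
  have c := (b.add b2).mul_left (1 / 2)
  convert! c using 1
  · funext T
    simp only [Function.comp, Equiv.neg_apply, vv_neg h0 h1]
    push_cast
    ring
  · ring

def SS (q : ℝ) (s : ℤ) : ℝ := ∑' n : ℤ, jt (q ^ 3) n * gg q (s - n)

lemma q3_one (h0 : 0 < q) (h1 : q < 1) : q ^ 3 < 1 := pow_lt_one₀ h0.le h1 (by norm_num)

lemma SS_conv (h0 : 0 < q) (h1 : q < 1) {x : ℝ} (hx : q ^ 3 < x) (hx1 : x < 1) :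
    (∀ s, Summable fun n => jt (q ^ 3) n * gg q (s - n)) ∧
    HasSum (fun s => x ^ s * SS q s) (js (q ^ 3) x * FF q x) := by
  have hx0 : 0 < x := (pow_pos h0 3).trans hx
  have h := conv_aux (summable_j_norm (pow_pos h0 3) (q3_one h0 h1) hx0) (F_summable h0 h1 hx hx1)
  constructor
  · intro s
    refine ((h.1 s).mul_left ((x ^ s)⁻¹)).congr fun n => ?_
    rw [x_split hx0.ne' s n]
    have := (zpow_pos hx0 n).ne'
    have := (zpow_pos hx0 (s - n)).ne'
    field_simp
  · convert! h.2 using 1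
    funext s
    rw [SS, ← tsum_mul_left]
    congr 1; funext n
    rw [x_split hx0.ne' s n]
    ring

lemma SS_summable (h0 : 0 < q) (h1 : q < 1) (s : ℤ) :
    Summable fun n => jt (q ^ 3) n * gg q (s - n) :=
  (SS_conv h0 h1 (q3_lt h0 h1) h1).1 s

lemma js_self (h0 : 0 < q) : js q q = 0 := by
  have h := js_one h0
  unfold js at h ⊢
  rw [← (Equiv.addRight (1 : ℤ)).tsum_eq] at h
  rw [← neg_eq_zero, ← tsum_neg, ← h]
  congr 1; funext n
  simp only [Equiv.coe_addRight, jt_succ h0]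
  simp
  ring

lemma SS_succ (h0 : 0 < q) (h1 : q < 1) (s : ℤ) :
    SS q (s + 1) = -(q * (q ^ 3) ^ s) * SS q s := by
  have h3 : 0 < q ^ 3 := pow_pos h0 3
  have a : HasSum (fun n => jt (q ^ 3) n * (q ^ 3) ^ n) 0 := by
    have := (summable_j_norm h3 (q3_one h0 h1) h3).of_norm.hasSum
    have e := js_self h3
    rw [js] at e
    rwa [e] at this
  have b := (SS_summable h0 h1 s).hasSum.mul_left (q * (q ^ 3) ^ s)
  have c := (a.add b).neg
  unfold SS
  rw [← (Equiv.addRight (1 : ℤ)).tsum_eq]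
  rw [show -(q * (q ^ 3) ^ s) * ∑' n : ℤ, jt (q ^ 3) n * gg q (s - n) =
    -(0 + (q * (q ^ 3) ^ s) * ∑' n : ℤ, jt (q ^ 3) n * gg q (s - n)) by ring, ← c.tsum_eq]
  congr 1; funext n
  simp only [Equiv.coe_addRight, jt_succ h3]
  rw [show s + 1 - (n + 1) = s - n by ring]
  have e : q * (q ^ 3) ^ s = (q ^ 3) ^ n * q ^ (3 * (s - n) + 1) := by
    rw [show (q ^ 3 : ℝ) = q ^ (3 : ℤ) by norm_cast, ← zpow_mul, ← zpow_mul, ← zpow_add₀ h0.ne',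
      ← zpow_one_add₀ h0.ne']
    congr 1; ring
  have d := zp_ne h0 h1 (k := 3 * (s - n) + 1) (by omega)
  rw [e]
  unfold gg
  generalize q ^ (3 * (s - n) + 1) = u at *
  field_simp
  ring

lemma SS_eq (h0 : 0 < q) (h1 : q < 1) (s : ℤ) : SS q s = q ^ s * jt (q ^ 3) s * SS q 0 := by
  have h3 : 0 < q ^ 3 := pow_pos h0 3
  induction s using Int.induction_on with
  | zero => simp [tri, jt]
  | succ n ih => rw [SS_succ h0 h1, ih, jt_succ h3, zpow_add_one₀ h0.ne']; ring
  | pred n ih =>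
    have h := SS_succ h0 h1 (-(n : ℤ) - 1)
    rw [sub_add_cancel, ih] at h
    have h2 := jt_succ h3 (-(n : ℤ) - 1)
    rw [sub_add_cancel] at h2
    have h4 := zpow_add_one₀ h0.ne' (-(n : ℤ) - 1)
    rw [sub_add_cancel] at h4
    rw [h2, h4] at h
    have := (zpow_pos h3 (-(n : ℤ) - 1)).ne'
    have e : q * (q ^ 3) ^ (-(n : ℤ) - 1) ≠ 0 := mul_ne_zero h0.ne' this
    apply mul_left_cancel₀ e
    linarith

lemma SS_js (h0 : 0 < q) (h1 : q < 1) {x : ℝ} (hx : q ^ 3 < x) (hx1 : x < 1) :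
    js (q ^ 3) x * FF q x = SS q 0 * js (q ^ 3) (x * q) := by
  rw [← (SS_conv h0 h1 hx hx1).2.tsum_eq, js, ← tsum_mul_left]
  congr 1; funext s
  rw [SS_eq h0 h1, mul_zpow]
  ring

lemma FF_q2 (h0 : 0 < q) (h1 : q < 1) : FF q (q ^ 2) = 0 := by
  have h := SS_js h0 h1 (q3_lt2 h0 h1) (q2_lt h0 h1)
  rw [← pow_succ, js_self (pow_pos h0 3), mul_zero, js_q2 h0, js_q h0 h1] at h
  exact (mul_eq_zero.1 h).resolve_left EE_pos.ne'

lemma FF_q (h0 : 0 < q) (h1 : q < 1) : FF q q = SS q 0 := by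
  have h := SS_js h0 h1 (q3_lt h0 h1) h1
  rw [← pow_two, js_q2 h0, js_q h0 h1, mul_comm] at h
  exact mul_right_cancel₀ EE_pos.ne' h

def DD (q : ℝ) (n s : ℤ) : ℝ := gg q (s - n) - gg q s

lemma DD_nat (h0 : 0 < q) (h1 : q < 1) (n : ℕ) :
    (Summable (fun s => ‖DD q n s‖) ∧ ∑' s, ‖DD q n s‖ ≤ n * ∑' r, ‖dl q r‖) ∧
    HasSum (DD q n) (-n) := by
  have hd : Summable fun r => ‖dl q r‖ := (dl_hasSum h0 h1).summable.norm
  induction n with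
  | zero =>
    have e : DD q ((0 : ℕ) : ℤ) = fun _ => 0 := by funext s; simp [DD]
    rw [e]
    refine ⟨⟨by simpa using summable_zero, by simp⟩, ?_⟩
    simpa using (hasSum_zero (f := fun _ : ℤ => (0 : ℝ)))
  | succ n ih =>
    obtain ⟨⟨a, b⟩, c⟩ := ih
    have e : ∀ s, DD q ((n + 1 : ℕ) : ℤ) s = DD q n s - dl q (s - (n + 1)) := fun s => by
      unfold DD dl
      rw [show s - ((n : ℤ) + 1) + 1 = s - n by ring]
      push_cast
      ring
    have hd' := (Equiv.subRight ((n : ℤ) + 1)).summable_iff.2 hd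
    have hd2 : Summable fun s => ‖dl q (s - (n + 1))‖ := hd'
    have hle : ∀ s, ‖DD q ((n + 1 : ℕ) : ℤ) s‖ ≤ ‖DD q n s‖ + ‖dl q (s - (n + 1))‖ := fun s => by
      rw [e]; exact norm_sub_le _ _
    have hs := (a.add hd2).of_nonneg_of_le (fun s => norm_nonneg _) hle
    refine ⟨⟨hs, ?_⟩, ?_⟩
    · refine (hs.tsum_le_tsum hle (a.add hd2)).trans ?_
      rw [a.tsum_add hd2]
      have := (Equiv.subRight ((n : ℤ) + 1)).tsum_eq (fun r => ‖dl q r‖)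
      simp only [Equiv.subRight_apply] at this
      rw [this]
      push_cast
      linarith
    · have := c.sub ((Equiv.subRight ((n : ℤ) + 1)).hasSum_iff.2 (dl_hasSum h0 h1))
      convert! this using 1
      · funext s
        rw [e]
        rfl
      · push_cast; ring

lemma DD_int (h0 : 0 < q) (h1 : q < 1) (n : ℤ) :
    (Summable (fun s => ‖DD q n s‖) ∧ ∑' s, ‖DD q n s‖ ≤ |(n : ℝ)| * ∑' r, ‖dl q r‖) ∧
    HasSum (DD q n) (-n) := by
  rcases Int.eq_nat_or_neg n with ⟨m, rfl | rfl⟩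
  · simpa using DD_nat h0 h1 m
  · obtain ⟨⟨a, b⟩, c⟩ := DD_nat h0 h1 m
    have e : ∀ s, DD q (-(m : ℤ)) s = - DD q m (s + m) := fun s => by
      unfold DD
      rw [show s - -(m : ℤ) = s + m by ring, show s + (m : ℤ) - m = s by ring]
      ring
    have a' := (Equiv.addRight (m : ℤ)).summable_iff.2 a
    have b' := (Equiv.addRight (m : ℤ)).tsum_eq (fun s => ‖DD q m s‖)
    simp only [Equiv.coe_addRight] at b'
    have c' := ((Equiv.addRight (m : ℤ)).hasSum_iff.2 c).neg
    refine ⟨⟨?_, ?_⟩, ?_⟩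
    · simp_rw [e, norm_neg]
      exact a'
    · simp_rw [e, norm_neg, b']
      simpa using b
    · convert! c' using 1
      · funext s
        exact e s
      · push_cast; ring

lemma SS_total (h0 : 0 < q) (h1 : q < 1) : SS q 0 * EE q = EE (q ^ 3) ^ 3 := by
  have h3 : 0 < q ^ 3 := pow_pos h0 3
  have h31 := q3_one h0 h1
  have S : Summable (fun p : ℤ × ℤ => jt (q ^ 3) p.1 * DD q p.1 p.2) := by
    apply Summable.of_norm
    rw [summable_prod_of_nonneg (fun _ => norm_nonneg _)]
    constructor
    · intro n
      simp only [norm_mul]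
      exact (DD_int h0 h1 n).1.1.mul_left _
    · refine ((summable_jw_norm h3 h31 one_pos).mul_right (∑' r, ‖dl q r‖)).of_nonneg_of_le
        (fun n => tsum_nonneg fun _ => norm_nonneg _) fun n => ?_
      simp only [norm_mul, tsum_mul_left, one_zpow, mul_one, norm_one]
      have := mul_le_mul_of_nonneg_left (DD_int h0 h1 n).1.2 (norm_nonneg (jt (q ^ 3) n))
      rw [Real.norm_eq_abs (n : ℝ)]
      linarith
  have H := S.hasSum
  have H1 := H.prod_fiberwise (fun n => (DD_int h0 h1 n).2.mul_left (jt (q ^ 3) n))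
  have H2 := ((Equiv.prodComm ℤ ℤ).hasSum_iff.2 H).prod_fiberwise (g := SS q) (fun s => by
    have z : HasSum (fun n : ℤ => jt (q ^ 3) n) 0 := by
      have a := (summable_j_norm h3 h31 one_pos).of_norm.hasSum
      have b := js_one h3
      rw [js] at b
      rw [b] at a
      simpa using a
    have := (SS_summable h0 h1 s).hasSum.sub (z.mul_right (gg q s))
    convert! this using 1
    · funext n
      simp [DD]
      ring
    · simp [SS])
  have e1 := H1.tsum_eq
  have e2 := H2.tsum_eq
  rw [← e1] at e2
  have e3 : ∑' s, SS q s = SS q 0 * EE q := by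
    rw [← js_q h0 h1, js, ← tsum_mul_left]
    congr 1; funext s
    rw [SS_eq h0 h1]; ring
  have e4 : ∑' n : ℤ, jt (q ^ 3) n * (-(n : ℝ)) = EE (q ^ 3) ^ 3 := by
    have := cc_eq h3 h31
    rw [cc] at this
    rw [← neg_neg (EE (q ^ 3) ^ 3), ← this, ← tsum_neg]
    congr 1; funext n; ring
  rw [← e3, e2, e4]

lemma FF_TT (h0 : 0 < q) (h1 : q < 1) : FF q q = TT q 0 := by
  have := SS_total h0 h1
  rw [← FF_q h0 h1, ← TT_main h0 h1] at this
  exact mul_right_cancel₀ EE_pos.ne' this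

lemma cube_fin (h0 : 0 < q) (h1 : q < 1) :
    HasSum (fun T : ℤ => (T : ℝ) ^ 2 / 2 * vv q T) (q * TT q 0 ^ 3) := by
  rw [← FF_TT h0 h1]
  exact cube_main h0 h1 (FF_q2 h0 h1)

def sq (μ : YoungDiagram) (i : ℕ) : ℤ := μ.rowLen i - i - 1

def SP (n0 n1 n2 x : ℤ) : Prop :=
  x / 3 < (if x % 3 = 0 then n0 else if x % 3 = 1 then n1 else n2)

lemma sq_anti (μ : YoungDiagram) : StrictAnti (sq μ) := by
  refine strictAnti_nat_of_succ_lt fun n => ?_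
  have := μ.rowLen_anti n (n + 1) (by omega)
  unfold sq
  push_cast
  omega

lemma core_closed (μ : YoungDiagram) (h : μ.IsThreeCore) (i : ℕ) : ∃ m, sq μ m = sq μ i - 3 := by
  by_contra! hc
  set y := sq μ i - 3 with hy
  have hex : ∃ m, sq μ m < y := by
    have hb : ∀ m : ℕ, sq μ m ≤ sq μ 0 - m := by
      intro m
      have := μ.rowLen_anti 0 m (by omega)
      unfold sq
      push_cast
      omega
    refine ⟨(sq μ 0 - y + 1).toNat, ?_⟩
    have := hb (sq μ 0 - y + 1).toNat
    omega
  classical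
  have hs := Nat.find_spec hex
  have hm := fun m => Nat.find_min hex (m := m)
  set k := Nat.find hex
  have hik : i < k := by
    by_contra hle
    have := (sq_anti μ).antitone (not_lt.1 hle)
    omega
  have h1 : y < sq μ (k - 1) := by
    have a := hm (k - 1) (by omega)
    have b := hc (k - 1)
    omega
  have hj0 : 0 ≤ y + k := by unfold sq at hs; omega
  obtain ⟨j, hj⟩ := Int.eq_ofNat_of_zero_le hj0
  have m1 : (k - 1, j) ∈ μ := by
    rw [YoungDiagram.mem_iff_lt_rowLen]
    unfold sq at h1
    omega
  have m2 : (k, j) ∉ μ := by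
    rw [YoungDiagram.mem_iff_lt_rowLen]
    unfold sq at hs
    omega
  have m3 : (i, j) ∈ μ := μ.up_left_mem (by omega) le_rfl m1
  rw [YoungDiagram.mem_iff_lt_colLen] at m1 m2
  have := h (i, j) (by simpa using m3)
  apply this
  have e : μ.hookLength i j = 3 := by
    unfold YoungDiagram.hookLength
    have : sq μ i = μ.rowLen i - i - 1 := rfl
    rw [YoungDiagram.mem_iff_lt_rowLen] at m3
    omega
  simp only [e]
  exact dvd_rfl

lemma closed_core (μ : YoungDiagram) (h : ∀ i, ∃ m, sq μ m = sq μ i - 3) : μ.IsThreeCore := by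
  rintro ⟨i, j⟩ hc ⟨t, ht⟩
  have hc : (i, j) ∈ μ := by simpa using hc
  simp only at ht
  have hcl : ∀ t : ℕ, ∃ m, sq μ m = sq μ i - 3 * t := by
    intro t
    induction t with
    | zero => exact ⟨i, by simp⟩
    | succ t ih =>
      obtain ⟨m, hm⟩ := ih
      obtain ⟨m', hm'⟩ := h m
      exact ⟨m', by push_cast; omega⟩
  obtain ⟨m, hm⟩ := hcl t
  have a := YoungDiagram.mem_iff_lt_rowLen.1 hc
  have b := YoungDiagram.mem_iff_lt_colLen.1 hc
  unfold YoungDiagram.hookLength at ht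
  have c : (m, j) ∈ μ ↔ _ := YoungDiagram.mem_iff_lt_rowLen
  rw [YoungDiagram.mem_iff_lt_colLen] at c
  unfold sq at hm
  omega

lemma exists_thr (P : ℤ → Prop) (h1 : ∀ k, P k → P (k - 1)) (h2 : ∃ L, ∀ k, P k → k ≤ L)
    (h3 : ∃ k, P k) : ∃ n, ∀ k, P k ↔ k < n := by
  obtain ⟨m, hm, hm2⟩ := Int.exists_greatest_of_bdd h2 h3
  refine ⟨m + 1, fun k => ⟨fun hk => by have := hm2 k hk; omega, fun hk => ?_⟩⟩
  have : ∀ t : ℕ, P (m - t) := by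
    intro t
    induction t with
    | zero => simpa using hm
    | succ t ih => have := h1 _ ih; push_cast; rwa [← sub_sub]
  have := this (m - k).toNat
  rwa [show m - ((m - k).toNat : ℤ) = k by omega] at this

lemma rowLen_ev (μ : YoungDiagram) : ∃ L : ℕ, ∀ i, L ≤ i → μ.rowLen i = 0 := by
  refine ⟨μ.colLen 0, fun i hi => ?_⟩
  have c : (i, 0) ∈ μ ↔ _ := YoungDiagram.mem_iff_lt_rowLen
  rw [YoungDiagram.mem_iff_lt_colLen] at c
  omega

lemma core_SP (μ : YoungDiagram) (h : μ.IsThreeCore) :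
    ∃ n0 n1 n2, ∀ x, x ∈ Set.range (sq μ) ↔ SP n0 n1 n2 x := by
  have key : ∀ r : ℤ, ∃ n, ∀ k : ℤ, (∃ i, sq μ i = 3 * k + r) ↔ k < n := by
    intro r
    apply exists_thr
    · rintro k ⟨i, hi⟩
      obtain ⟨m, hm⟩ := core_closed μ h i
      exact ⟨m, by omega⟩
    · refine ⟨|sq μ 0| + |r|, ?_⟩
      rintro k ⟨i, hi⟩
      have := (sq_anti μ).antitone (Nat.zero_le i)
      rcases abs_cases (sq μ 0) with a | a <;> rcases abs_cases r with b | b <;> omega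
    · obtain ⟨L, hL⟩ := rowLen_ev μ
      refine ⟨-(|r| + L + 1), (3 * (|r| + L + 1) - r - 1).toNat, ?_⟩
      unfold sq
      rw [hL]
      · rcases abs_cases r with b | b <;> push_cast <;> omega
      · rcases abs_cases r with b | b <;> omega
  obtain ⟨n0, h0⟩ := key 0
  obtain ⟨n1, h1⟩ := key 1
  obtain ⟨n2, h2⟩ := key 2
  refine ⟨n0, n1, n2, fun x => ?_⟩
  unfold SP
  simp only [Set.mem_range]
  have hx := Int.mul_ediv_add_emod x 3
  split_ifs with a b
  · rw [← h0, show 3 * (x / 3) + 0 = x by omega]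
  · rw [← h1, show 3 * (x / 3) + 1 = x by omega]
  · rw [← h2, show 3 * (x / 3) + 2 = x by omega]

def XX (n0 n1 n2 M : ℤ) : Finset ℤ :=
  (Finset.Ico (-M) n0).image (fun k => 3 * k) ∪ ((Finset.Ico (-M) n1).image (fun k => 3 * k + 1) ∪
    (Finset.Ico (-M) n2).image (fun k => 3 * k + 2))

lemma mem_XX (n0 n1 n2 M x : ℤ) : x ∈ XX n0 n1 n2 M ↔ SP n0 n1 n2 x ∧ -(3 * M) ≤ x := by
  unfold XX SP
  simp only [Finset.mem_union, Finset.mem_image, Finset.mem_Ico]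
  constructor
  · rintro (⟨k, hk, rfl⟩ | ⟨k, hk, rfl⟩ | ⟨k, hk, rfl⟩)
    · rw [if_pos (by omega)]; omega
    · rw [if_neg (by omega), if_pos (by omega)]; omega
    · rw [if_neg (by omega), if_neg (by omega)]; omega
  · rintro ⟨h, h'⟩
    split_ifs at h with a b
    · left; exact ⟨x / 3, by omega, by omega⟩
    · right; left; exact ⟨x / 3, by omega, by omega⟩
    · right; right; exact ⟨x / 3, by omega, by omega⟩

lemma sum_XX (n0 n1 n2 M : ℤ) (f : ℤ → ℤ) : ∑ x ∈ XX n0 n1 n2 M, f x =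
    ∑ k ∈ Finset.Ico (-M) n0, f (3 * k) + (∑ k ∈ Finset.Ico (-M) n1, f (3 * k + 1) +
      ∑ k ∈ Finset.Ico (-M) n2, f (3 * k + 2)) := by
  unfold XX
  rw [Finset.sum_union, Finset.sum_union, Finset.sum_image, Finset.sum_image, Finset.sum_image]
  · intro a _ b _ h; simp only at h; omega
  · intro a _ b _ h; simp only at h; omega
  · intro a _ b _ h; simp only at h; omega
  · rw [Finset.disjoint_left]
    simp only [Finset.mem_image, not_exists, not_and]
    rintro _ ⟨k, _, rfl⟩ l _
    omega
  · rw [Finset.disjoint_left]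
    simp only [Finset.mem_union, Finset.mem_image]
    rintro _ ⟨k, _, rfl⟩ (⟨l, _, h⟩ | ⟨l, _, h⟩) <;> omega

lemma card_XX (n0 n1 n2 M : ℤ) (h0 : -M ≤ n0) (h1 : -M ≤ n1) (h2 : -M ≤ n2) :
    ((XX n0 n1 n2 M).card : ℤ) = n0 + n1 + n2 + 3 * M := by
  rw [Finset.cast_card, sum_XX]
  simp only [Finset.sum_const, Int.card_Ico, nsmul_eq_mul, mul_one]
  omega

lemma sum_Ico_int (M n : ℤ) (h : -M ≤ n) : 2 * ∑ k ∈ Finset.Ico (-M) n, k = n * (n - 1) - M * (M + 1) := by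
  induction n, h using Int.leInduction with
  | base => simp; ring
  | succ n hn ih =>
    rw [← Finset.insert_Ico_right_eq_Ico_add_one hn, Finset.sum_insert (by simp), mul_add, ih]
    ring

lemma range_XX (μ : YoungDiagram) {n0 n1 n2 : ℤ} (h : ∀ x, x ∈ Set.range (sq μ) ↔ SP n0 n1 n2 x)
    (M : ℕ) (hM : ∀ i, 3 * M ≤ i → μ.rowLen i = 0) :
    (Finset.range (3 * M)).image (sq μ) = XX n0 n1 n2 M := by
  ext x
  rw [mem_XX, ← h]
  simp only [Finset.mem_image, Finset.mem_range, Set.mem_range]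
  constructor
  · rintro ⟨i, hi, rfl⟩
    refine ⟨⟨i, rfl⟩, ?_⟩
    unfold sq; omega
  · rintro ⟨⟨i, rfl⟩, hx⟩
    refine ⟨i, ?_, rfl⟩
    by_contra hi
    have := hM i (by omega)
    unfold sq at hx
    omega

lemma card_rows (μ : YoungDiagram) (L : ℕ) (hL : ∀ i, L ≤ i → μ.rowLen i = 0) :
    μ.card = ∑ i ∈ Finset.range L, μ.rowLen i := by
  have : μ.cells = (Finset.range L).biUnion (fun i => μ.row i) := by
    ext ⟨i, j⟩
    simp only [Finset.mem_biUnion, Finset.mem_range, YoungDiagram.mem_cells, YoungDiagram.mem_row_iff]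
    constructor
    · intro h
      refine ⟨i, ?_, h, rfl⟩
      by_contra hi
      have := hL i (by omega)
      rw [YoungDiagram.mem_iff_lt_rowLen] at h
      omega
    · rintro ⟨k, _, h, _⟩; exact h
  rw [YoungDiagram.card, this, Finset.card_biUnion]
  · simp [YoungDiagram.rowLen_eq_card]
  · intro i _ k _ hik
    change Disjoint (μ.row i) (μ.row k)
    rw [Finset.disjoint_left]
    rintro ⟨a, b⟩ h1 h2
    rw [YoungDiagram.mem_row_iff] at h1 h2
    exact hik (h1.2.symm.trans h2.2)

lemma SP_charge (μ : YoungDiagram) {n0 n1 n2 : ℤ} (h : ∀ x, x ∈ Set.range (sq μ) ↔ SP n0 n1 n2 x) :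
    n0 + n1 + n2 = 0 ∧ (μ.card : ℤ) = 3 * (tri n0 + tri n1 + tri n2) + n1 + 2 * n2 := by
  obtain ⟨L, hL⟩ := rowLen_ev μ
  set M : ℕ := L + n0.natAbs + n1.natAbs + n2.natAbs with hMd
  have hM : ∀ i, 3 * M ≤ i → μ.rowLen i = 0 := fun i hi => hL i (by omega)
  have e := range_XX μ h M hM
  have inj : Set.InjOn (sq μ) (Finset.range (3 * M)) := (sq_anti μ).injective.injOn
  have a := card_XX n0 n1 n2 M (by omega) (by omega) (by omega)
  rw [← e, Finset.card_image_of_injOn inj, Finset.card_range] at a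
  refine ⟨by push_cast at a; linarith, ?_⟩
  have b := sum_XX n0 n1 n2 M (fun x => x)
  rw [← e, Finset.sum_image inj] at b
  simp only [sq, Finset.sum_sub_distrib, Finset.sum_add_distrib] at b
  rw [← Nat.cast_sum, ← card_rows μ _ hM] at b
  simp only [Finset.sum_const, Int.card_Ico, nsmul_eq_mul, mul_one, Finset.card_range] at b
  have g : ∀ N : ℕ, 2 * ∑ i ∈ Finset.range N, (i : ℤ) = N * (N - 1) := by
    intro N
    induction N with
    | zero => simp
    | succ N ih => rw [Finset.sum_range_succ, mul_add, ih]; push_cast; ring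
  have g' := g (3 * M)
  have s0 := sum_Ico_int M n0 (by omega)
  have s1 := sum_Ico_int M n1 (by omega)
  have s2 := sum_Ico_int M n2 (by omega)
  have t0 := tri_two n0
  have t1 := tri_two n1
  have t2 := tri_two n2
  have c1 : (((n1 - -(M : ℤ)).toNat : ℕ) : ℤ) = n1 + M := by omega
  have c2 : (((n2 - -(M : ℤ)).toNat : ℕ) : ℤ) = n2 + M := by omega
  have m : ∀ n : ℤ, ∑ k ∈ Finset.Ico (-(M : ℤ)) n, 3 * k = 3 * ∑ k ∈ Finset.Ico (-(M : ℤ)) n, k :=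
    fun n => (Finset.mul_sum _ _ _).symm
  rw [c1, c2, m, m, m] at b
  push_cast at b g' a
  linarith

lemma exists_yd (r : ℕ → ℕ) (hr : Antitone r) (L : ℕ) (hL : ∀ i, L ≤ i → r i = 0) :
    ∃ μ : YoungDiagram, ∀ i, μ.rowLen i = r i := by
  let μ : YoungDiagram :=
    { cells := (Finset.range L ×ˢ Finset.range (r 0)).filter (fun p => p.2 < r p.1)
      isLowerSet := by
        rintro ⟨a, b⟩ ⟨c, d⟩ ⟨h1, h2⟩ hm
        simp only at h1 h2
        simp only [Finset.coe_filter, Finset.mem_product, Finset.mem_range, Set.mem_ofPred_eq] at hm ⊢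
        have := hr h1
        omega }
  refine ⟨μ, fun i => ?_⟩
  have key : ∀ j, j < μ.rowLen i ↔ j < r i := by
    intro j
    rw [← YoungDiagram.mem_iff_lt_rowLen, ← YoungDiagram.mem_cells]
    simp only [μ, Finset.mem_filter, Finset.mem_product, Finset.mem_range]
    refine ⟨fun h => h.2, fun h => ⟨⟨?_, ?_⟩, h⟩⟩
    · by_contra hi
      have := hL i (by omega)
      omega
    · exact h.trans_le (hr (Nat.zero_le i))
  have a := key (μ.rowLen i)
  have b := key (r i)
  omega

lemma exists_SP (n0 n1 n2 : ℤ) (hn : n0 + n1 + n2 = 0) :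
    ∃ μ : YoungDiagram, ∀ x, x ∈ Set.range (sq μ) ↔ SP n0 n1 n2 x := by
  classical
  set M : ℕ := n0.natAbs + n1.natAbs + n2.natAbs with hM
  set B : ℕ := 3 * M + 3 with hB
  have ub : ∀ x, SP n0 n1 n2 x → x ≤ B := by
    intro x hx
    unfold SP at hx
    split_ifs at hx <;> omega
  have lb : ∀ x, x < -(3 * M : ℤ) → SP n0 n1 n2 x := by
    intro x hx
    unfold SP
    split_ifs <;> omega
  let T : ℕ → Prop := fun k => SP n0 n1 n2 ((B : ℤ) - k)
  set K : ℕ := B + 1 + 3 * M with hK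
  have hT : ∀ j, T (K + j) := fun j => lb _ (by push_cast; omega)
  have hc : Nat.count T K = 3 * M := by
    rw [Nat.count_eq_card_filter_range]
    have e : ((Finset.range K).filter T).image (fun k : ℕ => (B : ℤ) - k) = XX n0 n1 n2 M := by
      ext x
      rw [mem_XX]
      simp only [Finset.mem_image, Finset.mem_filter, Finset.mem_range]
      constructor
      · rintro ⟨k, ⟨hk, hk'⟩, rfl⟩
        exact ⟨hk', by omega⟩
      · rintro ⟨h1, h2⟩
        have := ub x h1
        refine ⟨(B - x).toNat, ⟨by omega, ?_⟩, by omega⟩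
        change SP n0 n1 n2 _
        rwa [show (B : ℤ) - ((B - x).toNat : ℕ) = x by omega]
    have a := card_XX n0 n1 n2 M (by omega) (by omega) (by omega)
    rw [← e, Finset.card_image_of_injective] at a
    · have a' : (((Finset.range K).filter T).card : ℤ) = 3 * M := by rw [a]; linarith
      exact_mod_cast a'
    · intro a b h; simp only at h; omega
  have hcj : ∀ j, Nat.count T (K + j) = 3 * M + j := by
    intro j
    induction j with
    | zero => simpa using hc
    | succ j ih => rw [← add_assoc, Nat.count_succ, ih, if_pos (hT j)]; ring
  have hnth : ∀ j, Nat.nth T (3 * M + j) = K + j := fun j => by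
    rw [← hcj j]; exact Nat.nth_count (hT j)
  have hinf : (Set.ofPred T).Infinite := by
    rw [Set.infinite_iff_exists_gt]
    intro a
    exact ⟨K + (a + 1), hT _, by omega⟩
  have hmono := Nat.nth_strictMono hinf
  set z : ℕ → ℤ := fun i => (B : ℤ) - Nat.nth T i + i + 1 with hz
  have zanti : Antitone z := by
    refine antitone_nat_of_succ_le fun i => ?_
    have := hmono (Nat.lt_add_one i)
    simp only [hz]
    push_cast
    omega
  have z0 : ∀ j, z (3 * M + j) = 0 := fun j => by
    simp only [hz]; rw [hnth]; push_cast; omega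
  have zpos : ∀ i, 0 ≤ z i := fun i => by
    have := zanti (show i ≤ 3 * M + i by omega)
    rwa [z0] at this
  obtain ⟨μ, hμ⟩ := exists_yd (fun i => (z i).toNat)
    (fun a b h => Int.toNat_le_toNat (zanti h)) (3 * M) (fun i hi => by
      have := z0 (i - 3 * M)
      rw [show 3 * M + (i - 3 * M) = i by omega] at this
      simp [this])
  have hsq : ∀ i, sq μ i = B - Nat.nth T i := fun i => by
    unfold sq
    rw [hμ, Int.toNat_of_nonneg (zpos i)]
    simp only [hz]; ring
  refine ⟨μ, fun x => ?_⟩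
  constructor
  · rintro ⟨i, rfl⟩
    rw [hsq]
    exact Nat.nth_mem_of_infinite hinf i
  · intro hx
    have hx' := ub x hx
    have hk : T (B - x).toNat := by
      change SP n0 n1 n2 _
      rwa [show (B : ℤ) - ((B - x).toNat : ℕ) = x by omega]
    refine ⟨Nat.count T (B - x).toNat, ?_⟩
    rw [hsq, Nat.nth_count hk]
    omega

lemma sq_inj (μ ν : YoungDiagram) (h : ∀ x, x ∈ Set.range (sq μ) ↔ x ∈ Set.range (sq ν)) : μ = ν := by
  have hs : sq μ = sq ν := by
    have a : StrictMono (fun i => - sq μ i) := fun i j hij => neg_lt_neg (sq_anti μ hij)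
    have b : StrictMono (fun i => - sq ν i) := fun i j hij => neg_lt_neg (sq_anti ν hij)
    have e : (fun i => - sq μ i) = (fun i => - sq ν i) := by
      refine (StrictMono.range_inj a b).1 ?_
      ext x
      have := h (-x)
      simp only [Set.mem_range] at this ⊢
      simp only [neg_eq_iff_eq_neg]
      exact this
    funext i
    exact neg_injective (congrFun e i)
  ext ⟨i, j⟩
  simp only [YoungDiagram.mem_cells, YoungDiagram.mem_iff_lt_rowLen]
  have := congrFun hs i
  unfold sq at this
  omega

lemma SP_inj {n0 n1 n2 m0 m1 m2 : ℤ} (h : ∀ x, SP n0 n1 n2 x ↔ SP m0 m1 m2 x) :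
    n1 = m1 ∧ n2 = m2 := by
  have a1 : ∀ k, k < n1 ↔ k < m1 := fun k => by
    have := h (3 * k + 1)
    unfold SP at this
    rwa [if_neg (by omega), if_pos (by omega), if_neg (by omega), if_pos (by omega),
      show (3 * k + 1) / 3 = k by omega] at this
  have a2 : ∀ k, k < n2 ↔ k < m2 := fun k => by
    have := h (3 * k + 2)
    unfold SP at this
    rwa [if_neg (by omega), if_neg (by omega), if_neg (by omega), if_neg (by omega),
      show (3 * k + 2) / 3 = k by omega] at this
  have := a1 n1
  have := a1 m1
  have := a2 n2
  have := a2 m2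
  omega

lemma SP_closed {n0 n1 n2 x : ℤ} (h : SP n0 n1 n2 x) : SP n0 n1 n2 (x - 3) := by
  unfold SP at h ⊢
  rw [show (x - 3) % 3 = x % 3 by omega]
  split_ifs at h ⊢ <;> omega

lemma core_equiv : ∃ e : ℤ × ℤ ≃ {μ : YoungDiagram // μ.IsThreeCore},
    ∀ p, ((e p).1.card : ℤ) = ee 0 p.1 p.2 := by
  have hex : ∀ p : ℤ × ℤ, ∃ μ : YoungDiagram, ∀ x, x ∈ Set.range (sq μ) ↔
      SP (-p.1 - p.2) p.1 p.2 x := fun p => exists_SP _ _ _ (by ring)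
  choose f hf using hex
  have hcore : ∀ p, (f p).IsThreeCore := fun p => closed_core _ fun i => by
    have a := SP_closed ((hf p (sq (f p) i)).1 ⟨i, rfl⟩)
    exact (hf p _).2 a
  refine ⟨Equiv.ofBijective (fun p => ⟨f p, hcore p⟩) ⟨?_, ?_⟩, ?_⟩
  · intro p p' h
    have h' : f p = f p' := congrArg Subtype.val h
    have := SP_inj (fun x => (hf p x).symm.trans (h' ▸ hf p' x))
    exact Prod.ext this.1 this.2
  · rintro ⟨μ, hμ⟩
    obtain ⟨n0, n1, n2, hn⟩ := core_SP μ hμ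
    have c := (SP_charge μ hn).1
    refine ⟨(n1, n2), Subtype.ext (sq_inj _ _ fun x => ?_)⟩
    rw [hn, hf, show -n1 - n2 = n0 by omega]
  · intro p
    have := (SP_charge _ (hf p)).2
    change ((f p).card : ℤ) = _
    rw [this]
    unfold ee
    rw [show (0 : ℤ) - p.1 - p.2 = -p.1 - p.2 by ring]

abbrev CT := {μ : YoungDiagram // μ.IsThreeCore}

lemma core_hasSum (h0 : 0 < q) (h1 : q < 1) :
    HasSum (fun μ : CT => q ^ μ.1.card) (TT q 0) := by
  obtain ⟨e, he⟩ := core_equiv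
  rw [← e.hasSum_iff]
  have := (summable_ee h0 h1 0).hasSum
  convert! this using 1
  funext p
  simp only [Function.comp]
  rw [← he p, zpow_natCast]

def wt (t : CT × CT × CT) : ℕ := t.1.1.card + t.2.1.1.card + t.2.2.1.card

lemma triple_hasSum (h0 : 0 < q) (h1 : q < 1) :
    HasSum (fun t : CT × CT × CT => q ^ wt t) (TT q 0 ^ 3) := by
  have hs := core_hasSum h0 h1
  have hn := hs.summable.norm
  have s1 := summable_mul_of_summable_norm hn (hn.mul_norm hn)
  have e : TT q 0 ^ 3 = TT q 0 * (TT q 0 * TT q 0) := by ring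
  rw [e, ← hs.tsum_eq, tsum_mul_tsum_of_summable_norm hn hn,
    tsum_mul_tsum_of_summable_norm hn (hn.mul_norm hn)]
  convert! s1.hasSum using 1
  funext t
  simp only [wt, pow_add]
  ring

def fibEquiv (N : ℕ) : {t : CT × CT × CT // wt t = N} ≃
    {p : YoungDiagram × YoungDiagram × YoungDiagram //
      p.1.card + p.2.1.card + p.2.2.card = N ∧
      p.1.IsThreeCore ∧ p.2.1.IsThreeCore ∧ p.2.2.IsThreeCore} where
  toFun t := ⟨(t.1.1.1, t.1.2.1.1, t.1.2.2.1), t.2, t.1.1.2, t.1.2.1.2, t.1.2.2.2⟩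
  invFun p := ⟨(⟨p.1.1, p.2.2.1⟩, ⟨p.1.2.1, p.2.2.2.1⟩, ⟨p.1.2.2, p.2.2.2.2⟩), p.2.1⟩
  left_inv _ := rfl
  right_inv _ := rfl

lemma B3_hasSum (h0 : 0 < q) (h1 : q < 1) :
    HasSum (fun N : ℕ => (B3 N : ℝ) * q ^ N) (TT q 0 ^ 3) := by
  have h := (Equiv.sigmaFiberEquiv wt).hasSum_iff.2 (triple_hasSum h0 h1)
  have h2 := h.sigma (g := fun N => ∑' _ : {t : CT × CT × CT // wt t = N}, q ^ N) (fun N => by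
    have a := (h.summable.sigma_factor N).hasSum
    have e : ∀ t : {t : CT × CT × CT // wt t = N},
      ((fun t : CT × CT × CT => q ^ wt t) ∘ (Equiv.sigmaFiberEquiv wt)) ⟨N, t⟩ = q ^ N := by
      intro t
      simp [Equiv.sigmaFiberEquiv, t.2]
    simp only [e] at a ⊢
    exact a)
  convert! h2 using 1
  funext N
  rw [tsum_const, nsmul_eq_mul, B3, Nat.card_congr (fibEquiv N)]

def chi : ArithmeticFunction ℤ :=
  ⟨fun n => if n % 3 = 1 then 1 else if n % 3 = 2 then -1 else 0, by simp⟩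

lemma chi_apply (n : ℕ) : chi n = if n % 3 = 1 then 1 else if n % 3 = 2 then -1 else 0 := rfl

lemma chi_abs (n : ℕ) : |(chi n : ℝ)| ≤ 1 := by
  rw [chi_apply]; split_ifs <;> simp

lemma chi_mul (m n : ℕ) : chi (m * n) = chi m * chi n := by
  simp only [chi_apply, Nat.mul_mod m n 3]
  have a : m % 3 < 3 := Nat.mod_lt _ (by norm_num)
  have b : n % 3 < 3 := Nat.mod_lt _ (by norm_num)
  generalize m % 3 = x at *
  generalize n % 3 = y at *
  interval_cases x <;> interval_cases y <;> simp

lemma chi_mult : chi.IsMultiplicative :=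
  ⟨by simp [chi_apply], fun {m n} _ => chi_mul m n⟩

def p2 : ArithmeticFunction ℤ := ⟨fun n => (n : ℤ) ^ 2, by simp⟩

lemma p2_apply (n : ℕ) : p2 n = (n : ℤ) ^ 2 := rfl

lemma p2_mult : p2.IsMultiplicative :=
  ⟨by simp [p2_apply], fun {m n} _ => by simp [p2_apply, mul_pow]⟩

def ff : ArithmeticFunction ℤ := chi * p2

lemma ff_mult : ff.IsMultiplicative := chi_mult.mul p2_mult

lemma chi_hasSum {y : ℝ} (h0 : 0 ≤ y) (h1 : y < 1) :
    HasSum (fun d : ℕ => (chi d : ℝ) * y ^ d) ((y - y ^ 2) / (1 - y ^ 3)) := by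
  have hs : Summable (fun d : ℕ => (chi d : ℝ) * y ^ d) := by
    refine Summable.of_norm_bounded (summable_geometric_of_lt_one h0 h1) fun d => ?_
    rw [norm_mul, Real.norm_eq_abs, Real.norm_of_nonneg (pow_nonneg h0 d)]
    have := chi_abs d
    have := pow_nonneg h0 d
    nlinarith
  have a := hs.sum_add_tsum_nat_add 3
  have e : ∀ d, chi (d + 3) = chi d := fun d => by simp [chi_apply]
  have b : ∑' d : ℕ, (chi (d + 3) : ℝ) * y ^ (d + 3) = y ^ 3 * ∑' d : ℕ, (chi d : ℝ) * y ^ d := by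
    rw [← tsum_mul_left]
    congr 1; funext d
    rw [e]; ring
  rw [b] at a
  have c0 : chi 0 = 0 := rfl
  have c1 : chi 1 = 1 := rfl
  have c2 : chi 2 = -1 := rfl
  simp only [Finset.sum_range_succ, Finset.sum_range_zero, c0, c1, c2] at a
  push_cast at a
  have c : 1 - y ^ 3 ≠ 0 := by
    have := pow_lt_one₀ h0 h1 (n := 3) (by norm_num)
    linarith
  have d := hs.hasSum
  convert! d using 1
  rw [div_eq_iff c]
  linarith

lemma pnat_hasSum {f : ℕ → ℝ} {a : ℝ} (hf : f 0 = 0) :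
    HasSum (fun n : ℕ+ => f n) a ↔ HasSum f a := by
  rw [← Equiv.pnatEquivNat.symm.hasSum_iff, ← hasSum_nat_add_iff' (f := f) 1]
  simp [hf, Function.comp_def]

lemma vv_hasSum (h0 : 0 < q) (h1 : q < 1) :
    HasSum (fun n : ℕ+ => (n : ℝ) ^ 2 * vv q n) (q * TT q 0 ^ 3) := by
  have h := (cube_fin h0 h1).nat_add_neg
  refine (pnat_hasSum (f := fun n : ℕ => (n : ℝ) ^ 2 * vv q n) (by simp)).2 ?_
  convert! h using 1
  · funext n
    rw [vv_neg h0 h1]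
    push_cast
    ring
  · simp

lemma vv_expand (h0 : 0 < q) (h1 : q < 1) (n : ℕ+) :
    HasSum (fun d : ℕ+ => (chi d : ℝ) * ((n : ℝ) ^ 2 * q ^ ((d : ℕ) * n))) ((n : ℝ) ^ 2 * vv q n) := by
  have h := (chi_hasSum (pow_nonneg h0.le n) (pow_lt_one₀ h0.le h1 n.ne_zero)).mul_left ((n : ℝ) ^ 2)
  rw [← pnat_hasSum (by simp)] at h
  convert! h using 1
  · funext d
    rw [mul_comm (d : ℕ), pow_mul]; ring
  · unfold vv
    rw [← pow_mul, ← pow_mul, mul_comm _ 2, mul_comm _ 3]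
    norm_cast

lemma ff_hasSum (h0 : 0 < q) (h1 : q < 1) :
    HasSum (fun m : ℕ+ => (ff m : ℝ) * q ^ (m : ℕ)) (q * TT q 0 ^ 3) := by
  have hs : Summable (fun c : ℕ+ × ℕ+ => (chi c.1 : ℝ) * ((c.2 : ℝ) ^ 2 * q ^ ((c.1 : ℕ) * c.2))) := by
    have := summable_prod_mul_pow 2 (r := q) (by rwa [Real.norm_of_nonneg h0.le])
    refine Summable.of_norm_bounded this fun c => ?_
    have h : 0 ≤ (c.2 : ℝ) ^ 2 * q ^ ((c.1 : ℕ) * c.2) := by positivity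
    rw [norm_mul, Real.norm_eq_abs, Real.norm_of_nonneg h]
    have := chi_abs c.1
    nlinarith
  have H := hs.hasSum
  have a := ((Equiv.prodComm ℕ+ ℕ+).hasSum_iff.2 H).prod_fiberwise
    (g := fun n : ℕ+ => (n : ℝ) ^ 2 * vv q n) (fun n => vv_expand h0 h1 n)
  rw [a.unique (vv_hasSum h0 h1)] at H
  have b := (sigmaAntidiagonalEquivProd.hasSum_iff.2 H).sigma (fun m => hasSum_fintype _)
  convert! b using 1
  funext m
  rw [Finset.univ_eq_attach]
  have e : ∀ x : Nat.divisorsAntidiagonal m, ((fun c : ℕ+ × ℕ+ => (chi c.1 : ℝ) *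
      ((c.2 : ℝ) ^ 2 * q ^ ((c.1 : ℕ) * c.2))) ∘ sigmaAntidiagonalEquivProd) ⟨m, x⟩
      = (chi x.1.1 : ℝ) * (x.1.2 : ℝ) ^ 2 * q ^ (m : ℕ) := by
    intro x
    have := (Nat.mem_divisorsAntidiagonal.1 x.2).1
    rw [show q ^ (m : ℕ) = q ^ (x.1.1 * x.1.2) by rw [this]]
    simp only [Function.comp, sigmaAntidiagonalEquivProd, divisorsAntidiagonalFactors,
      Equiv.coe_fn_mk, PNat.mk_coe]
    ring
  simp only [e]
  rw [Finset.sum_attach (Nat.divisorsAntidiagonal m)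
    (fun x => (chi x.1 : ℝ) * (x.2 : ℝ) ^ 2 * q ^ (m : ℕ)), ← Finset.sum_mul, ff,
    ArithmeticFunction.mul_apply]
  push_cast [p2_apply]
  rfl

lemma coeff_zero (c : ℕ → ℝ) (h : ∀ q : ℝ, 0 < q → q < 1 → HasSum (fun n => c n * q ^ n) 0) :
    ∀ n, c n = 0 := by
  have hsum : ∀ z : ℝ, |z| < 1 → Summable (fun n => c n * z ^ n) := by
    intro z hz
    obtain ⟨r, hr, hr1⟩ := exists_between hz
    have hr0 : 0 < r := (abs_nonneg z).trans_lt hr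
    have := (h r hr0 hr1).summable.norm
    refine Summable.of_norm_bounded this fun n => ?_
    rw [norm_mul, norm_mul, norm_pow, norm_pow, Real.norm_eq_abs z, Real.norm_of_nonneg hr0.le]
    gcongr
  let p := FormalMultilinearSeries.ofScalars (𝕜 := ℝ) ℝ c
  let f : ℝ → ℝ := fun z => ∑' n, c n * z ^ n
  have hp : HasFPowerSeriesAt f p 0 := by
    rw [hasFPowerSeriesAt_iff]
    filter_upwards [Metric.ball_mem_nhds (0 : ℝ) one_pos] with z hz
    have hz' : |z| < 1 := by simpa using hz
    have := (hsum z hz').hasSum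
    simp only [zero_add, p, FormalMultilinearSeries.coeff_ofScalars, smul_eq_mul]
    simp only [mul_comm (z ^ _)]
    exact this
  have hfr : ∃ᶠ z in 𝓝[≠] (0 : ℝ), f z = 0 := by
    have h1 : ∃ᶠ z in 𝓝[>] (0 : ℝ), f z = 0 := by
      apply Eventually.frequently
      filter_upwards [Ioo_mem_nhdsGT (one_pos (α := ℝ))] with z hz
      exact (h z hz.1 hz.2).tsum_eq
    exact h1.filter_mono (nhdsWithin_mono _ fun x hx => ne_of_gt hx)
  have hev := (hp.analyticAt.frequently_zero_iff_eventually_zero).1 hfr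
  have hp0 : p = 0 := hp.eq_zero_of_eventually hev
  intro n
  have : p.coeff n = 0 := by rw [hp0]; rfl
  simpa [p, FormalMultilinearSeries.coeff_ofScalars] using this

lemma B3_eq (N : ℕ) : (B3 N : ℤ) = ff (N + 1) := by
  have := coeff_zero (fun n => (B3 n : ℝ) - (ff (n + 1) : ℝ)) (fun q h0 h1 => by
    have a := B3_hasSum h0 h1
    have b := ff_hasSum h0 h1
    rw [← Equiv.pnatEquivNat.symm.hasSum_iff] at b
    have b' := b.mul_left q⁻¹
    rw [inv_mul_cancel_left₀ h0.ne'] at b'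
    have c := a.sub b'
    rw [sub_self] at c
    convert! c using 1
    funext n
    simp only [Function.comp, Equiv.pnatEquivNat_symm_apply, Nat.succPNat_coe, Nat.succ_eq_add_one,
      pow_succ]
    field_simp) N
  have h2 : (B3 N : ℝ) = (ff (N + 1) : ℝ) := by linarith
  exact_mod_cast h2

lemma ff_prime_pow (p : ℕ) (hp : p.Prime) (hp3 : p % 3 = 2) (k : ℕ) :
    ((p : ℤ) ^ 2 + 1) * ff (p ^ k) = (p : ℤ) ^ (2 * (k + 1)) + (-1) ^ k := by
  have hchi : ∀ i, chi (p ^ i) = (-1) ^ i := by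
    intro i
    induction i with
    | zero => simp [chi_apply]
    | succ i ih => rw [pow_succ, chi_mul, ih, pow_succ]; simp [chi_apply, hp3]
  have e : ∀ k, ff (p ^ k) = ∑ i ∈ Finset.range (k + 1), (-1) ^ i * ((p : ℤ) ^ (k - i)) ^ 2 := by
    intro k
    rw [ff, ArithmeticFunction.mul_apply,
      Nat.sum_divisorsAntidiagonal (fun a b => chi a * p2 b), Nat.sum_divisors_prime_pow hp]
    refine Finset.sum_congr rfl fun i hi => ?_
    have hi' : i ≤ k := by simpa [Nat.lt_succ_iff] using hi
    rw [hchi, Nat.pow_div hi' hp.pos, p2_apply]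
    push_cast
    rfl
  have step : ∀ k, ff (p ^ (k + 1)) = (p : ℤ) ^ 2 * ff (p ^ k) + (-1) ^ (k + 1) := by
    intro k
    rw [e, e, Finset.sum_range_succ, Finset.mul_sum]
    congr 1
    · refine Finset.sum_congr rfl fun i hi => ?_
      have hi' : i ≤ k := by simpa [Nat.lt_succ_iff] using hi
      rw [show k + 1 - i = (k - i) + 1 by omega]
      ring
    · simp
  induction k with
  | zero => rw [e]; simp
  | succ k ih => rw [step, mul_add, mul_left_comm, ih]; ring

end TC
end TC

/-- For a prime p ≡ 2 (mod 3) with p ∤ n+1: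
(p²+1)·B₃(pᵏn + pᵏ − 1) = (p^{2(k+1)}+(−1)ᵏ)·B₃(n). -/
theorem B3_mult_two_mod_three (p k n : ℕ) (hp : p.Prime) (hp3 : p % 3 = 2)
    (hpn : ¬ p ∣ n + 1) :
    ((p : ℤ) ^ 2 + 1) * B3 (p ^ k * n + p ^ k - 1) =
      ((p : ℤ) ^ (2 * (k + 1)) + (-1) ^ k) * B3 n := by
  have hpos : 0 < p ^ k := pow_pos hp.pos k
  have e : p ^ k * n + p ^ k - 1 + 1 = p ^ k * (n + 1) := by
    rw [mul_add, mul_one]; omega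
  have hc : Nat.Coprime (p ^ k) (n + 1) := Nat.Coprime.pow_left k ((Nat.Prime.coprime_iff_not_dvd hp).2 hpn)
  rw [TC.B3_eq, TC.B3_eq, e, TC.ff_mult.map_mul_of_coprime hc, ← mul_assoc,
    TC.ff_prime_pow p hp hp3 k]
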